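/- arXiv:2401.01385 — 3 statements merged into one kernel-verified Lean document; each statement's English description precedes it below -/
import Mathlib

section
/- For every positive integer m, the value at x = 1/2 of the (2m)-th derivative of z(x) = ₂F₁(1/2,1/2;1;x) is a rational multiple of Γ(1/4)^2 / π^{3/2}, and the value of the (2m-1)-th derivative at x = 1/2 is a rational multiple of √π / Γ(1/4)^2. -/
/-- Ascending Pochhammer symbol `(a)_n = a(a+1)⋯(a+n-1)`. -/
noncomputable def poch (a : ℝ) (n : ℕ) : ℝ := ∏ i ∈ Finset.range n, (a + i)

/-- Gaussian hypergeometric series `₂F₁(a,b;c;x)`. -/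
noncomputable def hypF (a b c x : ℝ) : ℝ :=
  ∑' m : ℕ, poch a m * poch b m / poch c m * x ^ m / m.factorial

open Filter Topology

noncomputable def co (a : ℝ) (n : ℕ) : ℝ := poch a n * poch a n / (poch (2*a) n * n.factorial)

lemma poch_succ (a : ℝ) (n : ℕ) : poch a (n+1) = poch a n * (a + n) := by
  simp [poch, Finset.prod_range_succ]

lemma poch_pos {a : ℝ} (ha : 0 < a) (n : ℕ) : 0 < poch a n :=
  Finset.prod_pos fun i _ => by positivity

lemma co_pos {a : ℝ} (ha : 0 < a) (n : ℕ) : 0 < co a n := by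
  have := poch_pos ha n
  have := poch_pos (show 0 < 2*a by positivity) n
  unfold co; positivity

lemma co_zero (a : ℝ) : co a 0 = 1 := by simp [co, poch]

lemma co_succ {a : ℝ} (ha : 0 < a) (n : ℕ) :
    (2*a+n)*(n+1) * co a (n+1) = (a+n)^2 * co a n := by
  have h1 := poch_pos (show 0 < 2*a by positivity) n
  have h2 : 0 < 2*a+n := by positivity
  have h3 : (0:ℝ) < n.factorial := by positivity
  have h4 : (0:ℝ) < n + 1 := by positivity
  unfold co
  rw [poch_succ, poch_succ, Nat.factorial_succ]
  push_cast
  field_simp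

lemma poch_one (n : ℕ) : poch 1 n = n.factorial := by
  induction n with
  | zero => simp [poch]
  | succ n ih => rw [poch_succ, ih, Nat.factorial_succ]; push_cast; ring

lemma hypF_eq (x : ℝ) : hypF (1/2) (1/2) 1 x = ∑' n, co (1/2) n * x ^ n := by
  unfold hypF co
  congr 1; ext n
  rw [show (2*(1/2:ℝ)) = 1 by norm_num]
  have h1 := poch_pos (show (0:ℝ) < 1 by positivity) n
  field_simp

lemma co_tendsto {a : ℝ} (ha : 0 < a) :
    Tendsto (fun n : ℕ => ((n:ℝ)+1) * co a n) atTop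
      (𝓝 (Real.Gamma (2*a) / Real.Gamma a ^ 2)) := by
  rw [← tendsto_add_atTop_iff_nat 1]
  have hG : Real.Gamma a ≠ 0 := (Real.Gamma_pos_of_pos ha).ne'
  have h1 := ((Real.GammaSeq_tendsto_Gamma (2*a)).mul (Real.GammaSeq_tendsto_Gamma 1)).div
    ((Real.GammaSeq_tendsto_Gamma a).pow 2) (pow_ne_zero 2 hG)
  have h0 : Tendsto (fun n : ℕ => 1 + 2 / (n:ℝ)) atTop (𝓝 (1 + 0)) :=
    tendsto_const_nhds.add (tendsto_const_div_atTop_nhds_zero_nat 2)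
  have h2 := h0.mul h1
  rw [Real.Gamma_one] at h2
  simp only [mul_one, add_zero, one_mul] at h2
  refine h2.congr' ?_
  filter_upwards [eventually_gt_atTop 0] with n hn
  have hn' : (0:ℝ) < n := by exact_mod_cast hn
  have e : ∀ s : ℝ, Real.GammaSeq s n = (n:ℝ)^s * n.factorial / poch s (n+1) := by
    intro s; rfl
  simp only [Pi.div_apply, Pi.mul_apply, Pi.pow_apply, e]
  unfold co
  have p1 := poch_pos ha (n+1)
  have p2 := poch_pos (show 0 < 2*a by positivity) (n+1)
  have p3 : (0:ℝ) < n.factorial := by positivity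
  have p4 : (n:ℝ)^(2*a) = ((n:ℝ)^a)^2 := by
    rw [mul_comm, Real.rpow_mul hn'.le]; norm_cast
  have p5 : (0:ℝ) < (n:ℝ)^a := Real.rpow_pos_of_pos hn' a
  rw [p4, poch_one, Real.rpow_one, Nat.factorial_succ]
  push_cast
  field_simp
  ring

lemma abel_log (a : ℕ → ℝ) (c : ℝ)
    (h : Tendsto (fun n : ℕ => ((n:ℝ)+1) * a n) atTop (𝓝 c)) :
    (∀ x : ℝ, |x| < 1 → Summable (fun n => a n * x^n)) ∧
    Tendsto (fun x : ℝ => (∑' n, a n * x^n) / (-Real.log (1-x))) (𝓝[<] 1) (𝓝 c) := by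
  have hsum : ∀ x : ℝ, |x| < 1 → Summable (fun n => a n * x^n) := by
    intro x hx
    have hb : (fun n => a n * x^n) =O[atTop] (fun n : ℕ => x^n) := by
      have h1 : a =O[atTop] (fun _ => (1:ℝ)) := by
        have h2 := h.isBigO_one ℝ
        refine Asymptotics.IsBigO.trans ?_ h2
        refine Asymptotics.IsBigO.of_bound 1 (Eventually.of_forall fun n => ?_)
        rw [norm_mul, one_mul]
        refine le_mul_of_one_le_left (norm_nonneg _) ?_
        rw [Real.norm_eq_abs, abs_of_nonneg (by positivity)]
        linarith [(Nat.cast_nonneg n : (0:ℝ) ≤ n)]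
      simpa using h1.mul (Asymptotics.isBigO_refl (fun n : ℕ => x^n) atTop)
    refine summable_of_isBigO_nat ?_ hb.norm_right
    simpa [abs_pow] using summable_geometric_of_lt_one (abs_nonneg x) hx
  refine ⟨hsum, ?_⟩
  have hlog : Tendsto (fun x : ℝ => -Real.log (1-x)) (𝓝[<] 1) atTop := by
    refine tendsto_neg_atBot_atTop.comp (Real.tendsto_log_nhdsGT_zero.comp ?_)
    refine tendsto_nhdsWithin_iff.2 ⟨?_, ?_⟩
    · have : Tendsto (fun x : ℝ => 1 - x) (𝓝 1) (𝓝 (1-1)) := (continuous_const.sub continuous_id).tendsto 1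
      rw [sub_self] at this
      exact this.mono_left nhdsWithin_le_nhds
    · filter_upwards [self_mem_nhdsWithin] with x hx
      simpa using hx
  -- x * f(x)
  have key : Tendsto (fun x : ℝ => (x * ∑' n, a n * x^n) / (-Real.log (1-x))) (𝓝[<] 1) (𝓝 c) := by
    rw [Metric.tendsto_nhds]
    intro ε hε
    rw [Metric.tendsto_atTop] at h
    obtain ⟨N, hN⟩ := h (ε/2) (by positivity)
    set M : ℝ := ∑ n ∈ Finset.range N, |a n - c/(n+1)| with hM
    have hM0 : 0 ≤ M := Finset.sum_nonneg fun _ _ => abs_nonneg _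
    have hl2 : ∀ᶠ x in 𝓝[<] (1:ℝ), 2 * (M+1) / ε < -Real.log (1-x) := hlog.eventually_gt_atTop _
    have hpos : ∀ᶠ x in 𝓝[<] (1:ℝ), 0 < x :=
      (eventually_gt_nhds (by norm_num : (0:ℝ) < 1)).filter_mono nhdsWithin_le_nhds
    filter_upwards [hl2, hpos, self_mem_nhdsWithin] with x hx hx0 hx1
    have hx1 : x < 1 := hx1
    have hax : |x| < 1 := by rw [abs_of_pos hx0]; exact hx1
    have hL := Real.hasSum_pow_div_log_of_abs_lt_one hax
    set L := -Real.log (1-x) with hLdef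
    have hLpos : 0 < L := lt_of_le_of_lt (by positivity) hx
    have hF : HasSum (fun n => x * (a n * x^n)) (x * ∑' n, a n * x^n) := (hsum x hax).hasSum.mul_left x
    have hd := hF.sub (hL.mul_left c)
    set u : ℕ → ℝ := fun n => if n ∈ Finset.range N then |a n - c/(n+1)| else 0
    have hu : HasSum u M := by
      have : HasSum u (∑ n ∈ Finset.range N, u n) :=
        hasSum_sum_of_ne_finset_zero (fun b hb => if_neg hb)
      convert this using 1
      exact Finset.sum_congr rfl fun n hn => (if_pos hn).symm
    have hv := hu.add (hL.mul_left (ε/2))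
    have hbd : |x * (∑' n, a n * x^n) - c * L| ≤ M + ε/2 * L := by
      rw [← hd.tsum_eq, ← hv.tsum_eq, ← Real.norm_eq_abs]
      refine tsum_of_norm_bounded hv.summable.hasSum fun n => ?_
      have e1 : x * (a n * x^n) - c * (x^(n+1)/(n+1)) = (a n - c/(n+1)) * x^(n+1) := by
        have : (n:ℝ)+1 ≠ 0 := by positivity
        field_simp
        ring
      rw [e1, norm_mul, Real.norm_eq_abs, Real.norm_eq_abs, abs_of_pos (pow_pos hx0 (n+1))]
      have hp1 : x^(n+1) ≤ 1 := pow_le_one₀ hx0.le hx1.le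
      have hp0 : 0 < x^(n+1) := pow_pos hx0 _
      by_cases hn : n ∈ Finset.range N
      · have : u n = |a n - c/(n+1)| := if_pos hn
        rw [this]
        have : 0 ≤ ε/2*(x^(n+1)/(n+1)) := by positivity
        nlinarith [abs_nonneg (a n - c/(n+1))]
      · have : u n = 0 := if_neg hn
        rw [this, zero_add]
        have h3 := hN n (by simpa using hn)
        rw [Real.dist_eq] at h3
        have h4 : a n - c/(n+1) = ((n+1) * a n - c)/(n+1) := by
          have : (n:ℝ)+1 ≠ 0 := by positivity
          field_simp
        rw [h4, abs_div, abs_of_pos (show (0:ℝ) < n+1 by positivity), div_mul_eq_mul_div, ← mul_div_assoc]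
        gcongr
    rw [Real.dist_eq]
    have e2 : (x * ∑' n, a n * x^n) / L - c = (x * (∑' n, a n * x^n) - c * L)/L := by
      field_simp
    rw [e2, abs_div, abs_of_pos hLpos, div_lt_iff₀ hLpos]
    rw [div_lt_iff₀ hε] at hx
    nlinarith
  have hinv : Tendsto (fun x : ℝ => x⁻¹) (𝓝[<] 1) (𝓝 1) := by
    have := (continuousAt_inv₀ (one_ne_zero (α := ℝ))).tendsto
    rw [inv_one] at this
    exact this.mono_left nhdsWithin_le_nhds
  have := hinv.mul key
  rw [one_mul] at this
  refine this.congr' ?_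
  have hpos : ∀ᶠ x in 𝓝[<] (1:ℝ), 0 < x :=
    (eventually_gt_nhds (by norm_num : (0:ℝ) < 1)).filter_mono nhdsWithin_le_nhds
  filter_upwards [hpos] with x hx
  field_simp

lemma log_tendsto : Tendsto (fun x : ℝ => -Real.log (1-x)) (𝓝[<] 1) atTop := by
  refine tendsto_neg_atBot_atTop.comp (Real.tendsto_log_nhdsGT_zero.comp ?_)
  refine tendsto_nhdsWithin_iff.2 ⟨?_, ?_⟩
  · have : Tendsto (fun x : ℝ => 1 - x) (𝓝 1) (𝓝 (1-1)) := (continuous_const.sub continuous_id).tendsto 1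
    rw [sub_self] at this
    exact this.mono_left nhdsWithin_le_nhds
  · filter_upwards [self_mem_nhdsWithin] with x hx
    simpa using hx

lemma summable_poly {r : ℝ} (hr0 : 0 < r) (hr : r < 1) (p : ℕ) :
    Summable (fun n : ℕ => ((n:ℝ)+1)^p * r^n) := by
  have h := (summable_nat_add_iff 1).2 (summable_pow_mul_geometric_of_norm_lt_one p (r := r)
    (by rw [Real.norm_eq_abs, abs_of_pos hr0]; exact hr))
  refine (h.mul_right r⁻¹).congr fun n => ?_
  push_cast
  field_simp
  ring

lemma summable_series {a : ℕ → ℝ} {K : ℝ} {p : ℕ} (ha : ∀ n : ℕ, |a n| ≤ K * ((n:ℝ)+1)^p)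
    {x : ℝ} (hx : |x| < 1) : Summable (fun n => a n * x^n) := by
  obtain ⟨r, hr, hr1⟩ := exists_between hx
  have hr0 : 0 < r := (abs_nonneg x).trans_lt hr
  refine Summable.of_norm_bounded ((summable_poly hr0 hr1 p).mul_left K) fun n => ?_
  rw [norm_mul, norm_pow, Real.norm_eq_abs, Real.norm_eq_abs, ← mul_assoc]
  have := ha n
  have h0 := (abs_nonneg _).trans this
  gcongr

lemma hasDerivAt_series {a : ℕ → ℝ} {K : ℝ} {p : ℕ} (ha : ∀ n : ℕ, |a n| ≤ K * ((n:ℝ)+1)^p)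
    {x : ℝ} (hx : |x| < 1) :
    HasDerivAt (fun y => ∑' n, a n * y^n) (∑' n : ℕ, (((n:ℝ)+1) * a (n+1)) * x^n) x := by
  obtain ⟨r, hr, hr1⟩ := exists_between hx
  have hr0 : 0 < r := (abs_nonneg x).trans_lt hr
  have hK : 0 ≤ K := by simpa using (abs_nonneg _).trans (ha 0)
  have hu : Summable (fun n : ℕ => K * r⁻¹ * (((n:ℝ)+1)^(p+1) * r^n)) :=
    (summable_poly hr0 hr1 (p+1)).mul_left _
  have hbd : ∀ (n : ℕ) (y : ℝ), y ∈ Metric.ball (0:ℝ) r →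
      ‖a n * (n * y^(n-1))‖ ≤ K * r⁻¹ * (((n:ℝ)+1)^(p+1) * r^n) := by
    intro n y hy
    have hy' : |y| < r := by simpa using hy
    rcases n with _ | n
    · simp; positivity
    · have h1 := ha (n+1)
      have h0 := (abs_nonneg _).trans h1
      rw [norm_mul, norm_mul, norm_pow, Real.norm_eq_abs, Real.norm_eq_abs, Real.norm_eq_abs]
      rw [Nat.abs_cast, Nat.add_sub_cancel]
      calc |a (n+1)| * (((n+1:ℕ):ℝ) * |y|^n)
          ≤ (K * (((n+1:ℕ):ℝ)+1)^p) * ((((n+1:ℕ):ℝ)+1) * r^n) := by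
            gcongr
            linarith
        _ = _ := by
            rw [pow_succ r n]; field_simp; ring
  have hmem : x ∈ Metric.ball (0:ℝ) r := by simpa using hr
  have key := hasDerivAt_tsum_of_isPreconnected (g := fun n y => a n * y^n)
    (g' := fun n y => a n * (n * y^(n-1))) hu Metric.isOpen_ball
    (convex_ball (0:ℝ) r).isPreconnected
    (fun n y _ => (hasDerivAt_pow n y).const_mul (a n)) hbd hmem (summable_series ha hx) hmem
  refine key.congr_deriv ?_
  symm
  have hs : Summable (fun n : ℕ => a n * (n * x^(n-1))) :=
    Summable.of_norm_bounded hu fun n => hbd n x hmem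
  rw [hs.tsum_eq_zero_add]
  simp only [Nat.cast_zero, zero_mul, mul_zero, zero_add, Nat.add_sub_cancel]
  refine tsum_congr fun n => ?_
  push_cast; ring

lemma bound_deriv {a : ℕ → ℝ} {K : ℝ} {p : ℕ} (ha : ∀ n : ℕ, |a n| ≤ K * ((n:ℝ)+1)^p) (n : ℕ) :
    |((n:ℝ)+1) * a (n+1)| ≤ (K * 2^p) * ((n:ℝ)+1)^(p+1) := by
  have hK : 0 ≤ K := by simpa using (abs_nonneg _).trans (ha 0)
  have h1 := ha (n+1)
  rw [abs_mul, abs_of_pos (show (0:ℝ) < n+1 by positivity)]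
  calc ((n:ℝ)+1) * |a (n+1)| ≤ ((n:ℝ)+1) * (K * (2*((n:ℝ)+1))^p) := by
        gcongr
        refine h1.trans ?_
        gcongr
        push_cast
        linarith [(Nat.cast_nonneg n : (0:ℝ) ≤ n)]
    _ = _ := by rw [mul_pow]; ring

lemma hasSum_shift {f F : ℕ → ℝ} {x S : ℝ} (h : HasSum (fun n => f n * x^n) S)
    (h0 : F 0 = 0) (h1 : ∀ n, F (n+1) = f n) : HasSum (fun n => F n * x^n) (x * S) := by
  rw [← hasSum_nat_add_iff' 1]
  simp only [Finset.sum_range_one, h0, zero_mul, sub_zero]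
  refine (h.mul_left x).congr_fun ?_ |> fun h => h
  intro n
  rw [h1]; ring

lemma co_le (n : ℕ) : |co (1/2) n| ≤ 1 * ((n:ℝ)+1)^0 := by
  rw [abs_of_pos (co_pos (by norm_num) n)]
  simp only [pow_zero, mul_one]
  induction n with
  | zero => rw [co_zero]
  | succ n ih =>
    have h := co_succ (a := 1/2) (by norm_num) n
    have hp := co_pos (a := 1/2) (by norm_num) n
    have hn : (0:ℝ) ≤ n := Nat.cast_nonneg n
    by_contra hc
    push Not at hc
    nlinarith [mul_pos (show (0:ℝ) < (2*(1/2)+n)*(n+1) by positivity) (sub_pos.2 hc),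
      mul_nonneg (show (0:ℝ) ≤ (1/2+n)^2 by positivity) (sub_nonneg.2 ih)]

noncomputable def zz : ℝ → ℝ := fun t => hypF (1/2) (1/2) 1 t

lemma zz_eq : zz = fun x => ∑' n, co (1/2) n * x^n := by
  ext x; exact hypF_eq x

lemma zz_fps : HasFPowerSeriesOnBall zz (FormalMultilinearSeries.ofScalars ℝ (co (1/2))) 0 1 := by
  have hr : 1 ≤ (FormalMultilinearSeries.ofScalars ℝ (co (1/2))).radius := by
    have := (FormalMultilinearSeries.ofScalars ℝ (co (1/2))).le_radius_of_bound (r := 1) 1 ?_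
    · simpa using this
    · intro n
      rw [FormalMultilinearSeries.ofScalars_norm]
      simpa using co_le n
  have h := ((FormalMultilinearSeries.ofScalars ℝ (co (1/2))).hasFPowerSeriesOnBall
    (lt_of_lt_of_le one_pos hr)).mono one_pos hr
  convert h using 1
  rw [zz_eq]
  ext x
  rw [FormalMultilinearSeries.sum]
  refine tsum_congr fun n => ?_
  rw [FormalMultilinearSeries.ofScalars_apply_eq]; simp

lemma zz_analytic {x : ℝ} (hx : |x| < 1) : AnalyticAt ℝ zz x := by
  refine zz_fps.analyticAt_of_mem ?_
  rw [Metric.mem_eball, edist_dist, Real.dist_eq, sub_zero]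
  simpa using hx

lemma zz_iter {x : ℝ} (hx : |x| < 1) (k : ℕ) :
    HasDerivAt (iteratedDeriv k zz) (iteratedDeriv (k+1) zz x) x := by
  rw [iteratedDeriv_succ, iteratedDeriv_eq_iterate]
  exact ((zz_analytic hx).iterated_deriv k).differentiableAt.hasDerivAt

lemma ball_ev {x : ℝ} (hx : |x| < 1) : ∀ᶠ y in 𝓝 x, |y| < 1 :=
  (continuous_abs.tendsto x).eventually_lt_const hx

lemma ode0 {x : ℝ} (hx : |x| < 1) :
    x*(1-x) * iteratedDeriv 2 zz x + (1-2*x) * iteratedDeriv 1 zz x - 1/4 * zz x = 0 := by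
  have b0 := co_le
  have b1 := bound_deriv b0
  have b2 := bound_deriv b1
  have d0 : ∀ y : ℝ, |y| < 1 → deriv zz y = ∑' n : ℕ, (((n:ℝ)+1) * co (1/2) (n+1)) * y^n := by
    intro y hy
    rw [zz_eq]; exact (hasDerivAt_series b0 hy).deriv
  have e1 : iteratedDeriv 1 zz x = ∑' n : ℕ, (((n:ℝ)+1) * co (1/2) (n+1)) * x^n := by
    rw [iteratedDeriv_one]; exact d0 x hx
  have e2 := (hasDerivAt_series b1 hx).deriv
  have e3 : iteratedDeriv 2 zz x = deriv (fun y => ∑' n : ℕ, (((n:ℝ)+1) * co (1/2) (n+1)) * y^n) x := by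
    rw [iteratedDeriv_succ, iteratedDeriv_one]
    exact Filter.EventuallyEq.deriv_eq ((ball_ev hx).mono d0)
  rw [e2] at e3
  have s0 := (summable_series b0 hx).hasSum
  have s1 := (summable_series b1 hx).hasSum
  have s2 := (summable_series b2 hx).hasSum
  rw [← e1] at s1
  rw [← e3] at s2
  have e0 : zz x = ∑' n, co (1/2) n * x^n := by rw [zz_eq]
  rw [← e0] at s0
  have t1 := hasSum_shift (F := fun n => n * co (1/2) n) s1 (by simp) (by intro n; push_cast; ring)
  have t2 := hasSum_shift (F := fun n => n * ((n+1) * co (1/2) (n+1))) s2 (by simp)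
    (by intro n; push_cast; ring)
  have t3 := hasSum_shift (F := fun n => n * ((n-1) * co (1/2) n)) t2 (by simp)
    (by intro n; push_cast; ring)
  have tot := (((t2.sub t3).add s1).sub (t1.mul_left 2)).sub (s0.mul_left (1/4))
  have hz : HasSum (fun _ : ℕ => (0:ℝ)) 0 := hasSum_zero
  have := tot.unique (hz.congr_fun ?_)
  · linear_combination this
  · intro n
    have h := co_succ (a := 1/2) (by norm_num) n
    linear_combination x^n * h

lemma ode (k : ℕ) : ∀ x : ℝ, |x| < 1 →
    x*(1-x) * iteratedDeriv (k+2) zz x + (k+1)*((1-2*x) * iteratedDeriv (k+1) zz x)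
      - (k+1/2)^2 * iteratedDeriv k zz x = 0 := by
  induction k with
  | zero =>
    intro x hx
    have := ode0 hx
    simp only [iteratedDeriv_zero, Nat.cast_zero, zero_add]
    linear_combination this
  | succ k ih =>
    intro x hx
    have h2 := zz_iter hx (k+2)
    have h1 := zz_iter hx (k+1)
    have h0 := zz_iter hx k
    have hid := hasDerivAt_id x
    have hA := ((hid.mul (hid.const_sub 1)).mul h2).add
      (((((hid.const_mul 2).const_sub 1)).mul h1).const_mul ((k:ℝ)+1)) |>.sub
      (h0.const_mul (((k:ℝ)+1/2)^2))
    have hB : HasDerivAt (fun _ : ℝ => (0:ℝ)) 0 x := hasDerivAt_const x 0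
    have := hA.unique (hB.congr_of_eventuallyEq ((ball_ev hx).mono fun y hy => ?_))
    · simp only [id, Pi.mul_apply] at this
      push_cast
      rw [show k+1+2 = k+2+1 by ring, show k+1+1 = k+2 by ring]  at *
      linear_combination this
    · have := ih y hy
      simpa using this

lemma rec_half (k : ℕ) :
    iteratedDeriv (k+2) zz (1/2) = 4 * (k+1/2)^2 * iteratedDeriv k zz (1/2) := by
  have := ode k (1/2) (by rw [abs_of_pos] <;> norm_num)
  linear_combination 4 * this

lemma taylor {s : ℝ} (hs : |s| < 1) :
    HasSum (fun n : ℕ => iteratedDeriv n zz (1/2) / (n.factorial * 2^n) * s^n) (zz ((1+s)/2)) := by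
  have hn : ((‖(1/2:ℝ)‖₊ : NNReal) : ENNReal) = ENNReal.ofReal (1/2) := by
    rw [← enorm_eq_nnnorm, Real.enorm_eq_ofReal (by norm_num)]
  have h := zz_fps.changeOrigin (y := (1/2:ℝ)) (by
    rw [hn, ← ENNReal.ofReal_one]
    exact (ENNReal.ofReal_lt_ofReal_iff one_pos).2 (by norm_num))
  have hy : s/2 ∈ Metric.eball (0:ℝ) (1 - ‖(1/2:ℝ)‖₊) := by
    rw [hn, ← ENNReal.ofReal_one, ← ENNReal.ofReal_sub _ (by norm_num), Metric.mem_eball, edist_dist,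
      Real.dist_eq, sub_zero, ENNReal.ofReal_lt_ofReal_iff (by norm_num), abs_div]
    norm_num
    linarith
  have := h.hasSum_iteratedFDeriv hy
  rw [zero_add, show (1/2 + s/2) = (1+s)/2 by ring] at this
  refine this.congr_fun fun n => ?_
  rw [iteratedFDeriv_apply_eq_iteratedDeriv_mul_prod]
  simp only [Finset.prod_const, Finset.card_univ, Fintype.card_fin, smul_eq_mul, div_pow]
  field_simp

lemma even_coeff (k : ℕ) : iteratedDeriv (2*k) zz (1/2) / ((2*k).factorial * 2^(2*k)) =
    zz (1/2) * co (1/4) k := by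
  induction k with
  | zero => simp [co_zero]
  | succ k ih =>
    have h := co_succ (a := 1/4) (by norm_num) k
    rw [show 2*(k+1) = 2*k+2 by ring, rec_half, Nat.factorial_succ, Nat.factorial_succ]
    have h1 : (0:ℝ) < (2*k).factorial := by positivity
    rw [div_eq_iff (by positivity)] at ih ⊢
    rw [ih]
    push_cast
    rw [pow_add]
    linear_combination (-(32:ℝ)/2) * zz (1/2) * (2*k).factorial * 2^(2*k) * h

lemma odd_coeff (k : ℕ) : iteratedDeriv (2*k+1) zz (1/2) / ((2*k+1).factorial * 2^(2*k+1)) =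
    (iteratedDeriv 1 zz (1/2) / 2) * co (3/4) k := by
  induction k with
  | zero => simp [co_zero]
  | succ k ih =>
    have h := co_succ (a := 3/4) (by norm_num) k
    rw [show 2*(k+1)+1 = 2*k+1+2 by ring, rec_half, Nat.factorial_succ (2*k+1+1),
      Nat.factorial_succ (2*k+1)]
    have h1 : (0:ℝ) < (2*k+1).factorial := by positivity
    rw [div_eq_iff (by positivity)] at ih ⊢
    rw [ih]
    push_cast
    rw [pow_add 2 (2*k+1)]
    linear_combination (-(32:ℝ)/2) * (iteratedDeriv 1 zz (1/2) / 2) * (2*k+1).factorial * 2^(2*k+1) * h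

noncomputable def S (a x : ℝ) : ℝ := ∑' n, co a n * x^n

lemma decomp {s : ℝ} (hs : |s| < 1) : zz ((1+s)/2) =
    zz (1/2) * S (1/4) (s^2) + s * (iteratedDeriv 1 zz (1/2) / 2 * S (3/4) (s^2)) := by
  have hs2 : |s^2| < 1 := by
    rw [abs_pow]; exact pow_lt_one₀ (abs_nonneg s) hs two_ne_zero
  have hE := ((abel_log _ _ (co_tendsto (a := 1/4) (by norm_num))).1 _ hs2).hasSum
  have hO := ((abel_log _ _ (co_tendsto (a := 3/4) (by norm_num))).1 _ hs2).hasSum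
  refine (taylor hs).unique (HasSum.even_add_odd ?_ ?_)
  · refine (hE.mul_left (zz (1/2))).congr_fun fun k => ?_
    rw [even_coeff, pow_mul]; ring
  · refine ((hO.mul_left (iteratedDeriv 1 zz (1/2) / 2)).mul_left s).congr_fun fun k => ?_
    rw [odd_coeff, pow_succ, pow_mul]; ring

lemma ev_abs : ∀ᶠ s in 𝓝[<] (1:ℝ), 0 < s ∧ s < 1 := by
  have hpos : ∀ᶠ x in 𝓝[<] (1:ℝ), 0 < x :=
    (eventually_gt_nhds (by norm_num : (0:ℝ) < 1)).filter_mono nhdsWithin_le_nhds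
  filter_upwards [hpos, self_mem_nhdsWithin] with x h1 h2
  exact ⟨h1, h2⟩

lemma limits : ∃ c1 c2 : ℝ, c1 = Real.Gamma (1/2) / Real.Gamma (1/4)^2 ∧
    c2 = Real.Gamma (3/2) / Real.Gamma (3/4)^2 ∧
    zz (1/2) * c1 - iteratedDeriv 1 zz (1/2) / 2 * c2 = 0 ∧
    zz (1/2) * c1 + iteratedDeriv 1 zz (1/2) / 2 * c2 = 1 / Real.pi := by
  refine ⟨_, _, rfl, rfl, ?_⟩
  have hE := (abel_log _ _ (co_tendsto (a := 1/4) (by norm_num))).2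
  have hO := (abel_log _ _ (co_tendsto (a := 3/4) (by norm_num))).2
  have hZ := (abel_log _ _ (co_tendsto (a := 1/2) (by norm_num))).2
  rw [show (2*(1/4):ℝ) = 1/2 by norm_num] at hE
  rw [show (2*(3/4):ℝ) = 3/2 by norm_num] at hO
  rw [show (2*(1/2):ℝ) = 1 by norm_num, Real.Gamma_one, Real.Gamma_one_half_eq,
    Real.sq_sqrt Real.pi_pos.le] at hZ
  have hid : Tendsto (fun s : ℝ => s) (𝓝[<] 1) (𝓝 1) := tendsto_id.mono_left nhdsWithin_le_nhds
  have hsq : Tendsto (fun s : ℝ => s^2) (𝓝[<] 1) (𝓝[<] 1) := by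
    refine tendsto_nhdsWithin_iff.2 ⟨by simpa using hid.pow 2, ?_⟩
    filter_upwards [ev_abs] with s hs
    exact pow_lt_one₀ hs.1.le hs.2 two_ne_zero
  have hhalf : Tendsto (fun s : ℝ => (1+s)/2) (𝓝[<] 1) (𝓝[<] 1) := by
    refine tendsto_nhdsWithin_iff.2 ⟨?_, ?_⟩
    · have := (hid.const_add 1).div_const 2
      norm_num at this
      exact this
    · filter_upwards [ev_abs] with s hs
      show (1+s)/2 < 1
      linarith [hs.2]
  have hE' := (hE.comp hsq).const_mul (zz (1/2))
  have hO' := hid.mul ((hO.comp hsq).const_mul (iteratedDeriv 1 zz (1/2) / 2))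
  rw [one_mul] at hO'
  have hl := log_tendsto.comp hsq
  have hl2 := log_tendsto.comp hhalf
  constructor
  · refine tendsto_nhds_unique (hE'.sub hO') ?_
    have hc : Tendsto (fun s : ℝ => zz ((1 + -s)/2)) (𝓝[<] 1) (𝓝 (zz 0)) := by
      refine ((zz_analytic (x := 0) (by simp)).continuousAt.tendsto).comp ?_
      have := (hid.neg.const_add 1).div_const 2
      norm_num at this
      simpa using this
    refine (hc.div_atTop hl).congr' ?_
    filter_upwards [ev_abs] with s hs
    have := decomp (s := -s) (by rw [abs_neg, abs_of_pos hs.1]; exact hs.2)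
    rw [this]
    simp only [Function.comp, S, neg_sq]
    ring
  · refine tendsto_nhds_unique (hE'.add hO') ?_
    have hr : Tendsto (fun s : ℝ => (-Real.log (1 - (1+s)/2)) / (-Real.log (1 - s^2)))
        (𝓝[<] 1) (𝓝 1) := by
      have hb : Tendsto (fun s : ℝ => Real.log (2*(1+s))) (𝓝[<] 1) (𝓝 (Real.log (2*(1+1)))) :=
        ((hid.const_add 1).const_mul 2).log (by norm_num)
      have := (hb.div_atTop hl).const_add 1
      rw [add_zero] at this
      refine this.congr' ?_
      filter_upwards [ev_abs, hl.eventually_gt_atTop 0] with s hs hp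
      simp only [Function.comp] at hp ⊢
      have e : Real.log (1 - s^2) = Real.log (1 - (1+s)/2) + Real.log (2*(1+s)) := by
        rw [← Real.log_mul (by linarith [hs.2]) (by linarith [hs.1])]
        congr 1; ring
      have hp' : Real.log (1 - s^2) ≠ 0 := by intro h; rw [h] at hp; simp at hp
      field_simp
      rw [e]; ring
    have := (hZ.comp hhalf).mul hr
    rw [mul_one] at this
    refine this.congr' ?_
    filter_upwards [ev_abs, hl2.eventually_gt_atTop 0] with s hs hp
    have h1 := decomp (s := s) (by rw [abs_of_pos hs.1]; exact hs.2)
    simp only [Function.comp] at hp ⊢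
    rw [div_mul_div_cancel₀ hp.ne']
    have h2 : (∑' n, co (1/2) n * ((1+s)/2)^n) = zz ((1+s)/2) := by rw [zz_eq]
    rw [h2, h1]
    simp only [S]
    ring

lemma val0 : zz (1/2) = (1/2) * (Real.Gamma (1/4) ^ 2 / Real.pi ^ ((3 : ℝ)/2)) := by
  obtain ⟨c1, c2, h1, h2, h3, h4⟩ := limits
  have hc : zz (1/2) * c1 = 1/(2*Real.pi) := by
    rw [mul_comm 2, ← div_div]; linarith
  have hG := Real.Gamma_pos_of_pos (show (0:ℝ) < 1/4 by norm_num)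
  have hpi := Real.pi_pos
  have hp : Real.pi ^ ((3:ℝ)/2) = Real.pi * Real.sqrt Real.pi := by
    rw [Real.sqrt_eq_rpow, ← Real.rpow_one_add' hpi.le (by norm_num)]; norm_num
  have hs := Real.sqrt_pos.2 hpi
  rw [h1, Real.Gamma_one_half_eq] at hc
  rw [hp]
  field_simp at hc ⊢
  linear_combination hc

lemma val1 : iteratedDeriv 1 zz (1/2) = 4 * (Real.sqrt Real.pi / Real.Gamma (1/4) ^ 2) := by
  obtain ⟨c1, c2, h1, h2, h3, h4⟩ := limits
  have hc : iteratedDeriv 1 zz (1/2) / 2 * c2 = 1/(2*Real.pi) := by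
    rw [mul_comm 2, ← div_div]; linarith
  have hG := Real.Gamma_pos_of_pos (show (0:ℝ) < 1/4 by norm_num)
  have hG3 := Real.Gamma_pos_of_pos (show (0:ℝ) < 3/4 by norm_num)
  have hpi := Real.pi_pos
  have hs := Real.sqrt_pos.2 hpi
  have hss := Real.sq_sqrt hpi.le
  have hrefl := Real.Gamma_mul_Gamma_one_sub (1/4)
  rw [show (1 - 1/4 : ℝ) = 3/4 by norm_num, show Real.pi * (1/4) = Real.pi/4 by ring,
    Real.sin_pi_div_four] at hrefl
  have hsq : (Real.Gamma (1/4) * Real.Gamma (3/4))^2 = 2 * Real.pi^2 := by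
    rw [hrefl, div_pow, div_pow, Real.sq_sqrt (by norm_num)]; ring
  have hG32 : Real.Gamma (3/2) = 1/2 * Real.sqrt Real.pi := by
    rw [show (3/2:ℝ) = 1/2 + 1 by norm_num, Real.Gamma_add_one (by norm_num), Real.Gamma_one_half_eq]
  rw [h2, hG32] at hc
  generalize iteratedDeriv 1 zz (1/2) = D at *
  generalize Real.Gamma (1/4) = g at *
  generalize Real.Gamma (3/4) = h at *
  generalize Real.sqrt Real.pi = r at *
  rw [← hss] at hc hsq
  field_simp at hc ⊢
  have h5 : r^3 * (D * g^2 - 4 * r) = 0 := by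
    linear_combination g^2 * hc + 2 * hsq
  have := (mul_eq_zero.1 h5).resolve_left (by positivity)
  linarith

lemma rat_mul (c : ℝ) (j : ℕ) (h : ∃ q : ℚ, iteratedDeriv j zz (1/2) = q * c) (m : ℕ) :
    ∃ q : ℚ, iteratedDeriv (2*m+j) zz (1/2) = q * c := by
  induction m with
  | zero => simpa using h
  | succ m ih =>
    obtain ⟨q, hq⟩ := ih
    refine ⟨4 * ((2*m+j:ℕ)+1/2)^2 * q, ?_⟩
    rw [show 2*(m+1)+j = 2*m+j+2 by ring, rec_half, hq]
    push_cast; ring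

theorem derivs_of_z_at_half_rational_multiples (m : ℕ) (hm : 1 ≤ m) :
    (∃ q : ℚ, iteratedDeriv (2 * m) (fun t => hypF (1/2) (1/2) 1 t) (1/2)
        = (q : ℝ) * (Real.Gamma (1/4) ^ 2 / Real.pi ^ ((3 : ℝ)/2))) ∧
    (∃ q : ℚ, iteratedDeriv (2 * m - 1) (fun t => hypF (1/2) (1/2) 1 t) (1/2)
        = (q : ℝ) * (Real.sqrt Real.pi / Real.Gamma (1/4) ^ 2)) := by
  constructor
  · exact rat_mul _ 0 ⟨1/2, by rw [iteratedDeriv_zero, val0]; push_cast; ring⟩ m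
  · obtain ⟨k, rfl⟩ : ∃ k, m = k + 1 := ⟨m - 1, by omega⟩
    rw [show 2*(k+1) - 1 = 2*k+1 by omega]
    exact rat_mul _ 1 ⟨4, by rw [val1]; push_cast; ring⟩ k
end

section
/- For any real a > 0, the integral from 0 to ∞ of x^a / (cos x + cosh x) dx satisfies ((1 - i^{a+1})/(1+i)^{a-1}) · ∫₀^∞ x^a/(cos x + cosh x) dx = 2π^{a+1} · Σ_{n=1}^∞ (-1)^{n-1} ((2n-1)/2)^a / cosh(((2n-1)/2)π). -/
open Complex Real
open MeasureTheory Filter Topology Set in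
lemma side_int (γ : ℝ → ℂ) (v : ℂ) (L : ℂ → ℂ) (a b : ℝ) (hγ : ∀ x, HasDerivAt γ v x)
    (hL : ∀ x ∈ Set.uIcc a b, HasDerivAt L (γ x)⁻¹ (γ x)) (h0 : ∀ x ∈ Set.uIcc a b, γ x ≠ 0) :
    v * ∫ x in a..b, (γ x)⁻¹ = L (γ b) - L (γ a) := by
  rw [← intervalIntegral.integral_const_mul]
  have hc : Continuous γ := continuous_iff_continuousAt.2 fun x => (hγ x).continuousAt
  have := intervalIntegral.integral_eq_sub_of_hasDerivAt (a := a) (b := b)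
    (f := fun x => L (γ x)) (f' := fun x => (γ x)⁻¹ * v)
    (fun x hx => (hL x hx).comp x (hγ x)) 
    (((hc.continuousOn.inv₀ h0).mul continuousOn_const).intervalIntegrable)
  rw [← this]
  congr 1; ext x; ring

lemma log_up (A c : ℝ) (hc : 0 < c) : Complex.log (A + c * I) = Complex.log (-(A + c * I)) + π * I := by
  rw [Complex.log, Complex.log, Complex.arg_neg_eq_arg_sub_pi_of_im_pos (by simpa using hc), norm_neg]
  push_cast; ring

lemma log_dn (A c : ℝ) (hc : 0 < c) : Complex.log (A - c * I) = Complex.log (-(A - c * I)) - π * I := by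
  rw [Complex.log, Complex.log, Complex.arg_neg_eq_arg_add_pi_of_im_neg (by simpa using hc), norm_neg]
  push_cast; ring

lemma rect_inv (α β c q : ℝ) (h1 : α < q) (h2 : q < β) (hc : 0 < c) :
    (∫ x in α..β, ((x : ℂ) + ((-c : ℝ) : ℂ) * I - q)⁻¹) - (∫ x in α..β, ((x : ℂ) + (c : ℂ) * I - q)⁻¹)
    + I * (∫ y in (-c)..c, ((β : ℂ) + (y : ℂ) * I - q)⁻¹)
    - I * (∫ y in (-c)..c, ((α : ℂ) + (y : ℂ) * I - q)⁻¹) = 2 * π * I := by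
  have hlog : ∀ z : ℂ, z ∈ Complex.slitPlane → HasDerivAt Complex.log z⁻¹ z := fun z hz => Complex.hasDerivAt_log hz
  have hlog' : ∀ z : ℂ, -z ∈ Complex.slitPlane → HasDerivAt (fun z => Complex.log (-z)) z⁻¹ z := fun z hz => by
    have := (hasDerivAt_neg z).clog hz
    convert this using 1
    rw [neg_div_neg_eq, one_div]
  have dx : ∀ k : ℂ, ∀ x : ℝ, HasDerivAt (fun x : ℝ => (x : ℂ) + k - q) 1 x := fun k x => 
    ((Complex.ofRealCLM.hasDerivAt (x := x)).add_const k).sub_const _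
  have dy : ∀ k : ℂ, ∀ x : ℝ, HasDerivAt (fun x : ℝ => k + (x : ℂ) * I - q) I x := fun k x => by
    have := (((Complex.ofRealCLM.hasDerivAt (x := x)).mul_const I).const_add k).sub_const (q : ℂ)
    simpa using this
  have hne : ∀ z : ℂ, z.im ≠ 0 → z ≠ 0 := fun z h h' => h (by simp [h'])
  have hne' : ∀ z : ℂ, z.re ≠ 0 → z ≠ 0 := fun z h h' => h (by simp [h'])
  have B := side_int _ _ Complex.log α β (dx (((-c : ℝ) : ℂ) * I))
    (fun x _ => hlog _ (Or.inr (by simpa using hc.ne'))) (fun x _ => hne _ (by simpa using hc.ne'))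
  have T := side_int _ _ Complex.log α β (dx ((c : ℂ) * I))
    (fun x _ => hlog _ (Or.inr (by simpa using hc.ne'))) (fun x _ => hne _ (by simpa using hc.ne'))
  have R := side_int _ _ Complex.log (-c) c (dy β)
    (fun x _ => hlog _ (Or.inl (by simpa using h2))) (fun x _ => hne' _ (by simp; linarith))
  have L := side_int _ _ (fun z => Complex.log (-z)) (-c) c (dy α)
    (fun x _ => hlog' _ (Or.inl (by simpa using h1))) (fun x _ => hne' _ (by simp; linarith))
  rw [one_mul] at B T
  rw [B, T, R, L]
  have u := log_up (α - q) c hc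
  have d := log_dn (α - q) c hc
  push_cast at u d ⊢
  have e1 : (α : ℂ) + c * I - q = α - q + c * I := by ring
  have e2 : (α : ℂ) + -c * I - q = α - q - c * I := by ring
  rw [e1, e2, u, d]
  ring

lemma rect_res (g : ℂ → ℂ) (α β c q : ℝ) (h1 : α < q) (h2 : q < β) (hc : 0 < c)
    (hg : DifferentiableOn ℂ g (Set.uIcc α β ×ℂ Set.uIcc (-c) c)) :
    (∫ x in α..β, g ((x : ℂ) + ((-c : ℝ) : ℂ) * I) * ((x : ℂ) + ((-c : ℝ) : ℂ) * I - q)⁻¹)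
     - (∫ x in α..β, g ((x : ℂ) + (c : ℂ) * I) * ((x : ℂ) + (c : ℂ) * I - q)⁻¹)
    + I * (∫ y in (-c)..c, g ((β : ℂ) + (y : ℂ) * I) * ((β : ℂ) + (y : ℂ) * I - q)⁻¹)
    - I * (∫ y in (-c)..c, g ((α : ℂ) + (y : ℂ) * I) * ((α : ℂ) + (y : ℂ) * I - q)⁻¹)
     = 2 * π * I * g q := by
  have hαβ : α ≤ β := (h1.trans h2).le
  have hcc : -c ≤ c := by linarith
  have hn : Set.uIcc α β ×ℂ Set.uIcc (-c) c ∈ nhds (q : ℂ) := by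
    rw [← mem_interior_iff_mem_nhds, Complex.interior_reProdIm, Set.uIcc_of_le hαβ, Set.uIcc_of_le hcc,
      interior_Icc, interior_Icc]
    simp [Complex.mem_reProdIm, h1, h2, hc]
  have hd := (Complex.differentiableOn_dslope hn).2 hg
  have H0 := Complex.integral_boundary_rect_eq_zero_of_differentiableOn (dslope g q) ⟨α, -c⟩ ⟨β, c⟩ hd
  have hcont := hd.continuousOn
  simp only [smul_eq_mul] at H0
  have key : ∀ (γ : ℝ → ℂ) (a b : ℝ), Continuous γ →
      (∀ x ∈ Set.uIcc a b, γ x ∈ Set.uIcc α β ×ℂ Set.uIcc (-c) c) → (∀ x ∈ Set.uIcc a b, γ x - q ≠ 0) →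
      (∫ x in a..b, g (γ x) * (γ x - q)⁻¹) = (∫ x in a..b, dslope g q (γ x)) + g q * ∫ x in a..b, (γ x - q)⁻¹ := by
    intro γ a b hγ hm h0
    have hci : ContinuousOn (fun x => (γ x - q)⁻¹) (Set.uIcc a b) := 
      (hγ.sub continuous_const).continuousOn.inv₀ h0
    rw [← intervalIntegral.integral_const_mul, ← intervalIntegral.integral_add]
    · apply intervalIntegral.integral_congr
      intro x hx
      have := h0 x hx
      simp only
      rw [dslope_of_ne _ (sub_ne_zero.1 this), slope_def_field]
      field_simp
      ring
    · exact (hcont.comp hγ.continuousOn hm).intervalIntegrable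
    · exact (continuousOn_const.mul hci).intervalIntegrable
  have hne : ∀ z : ℂ, z.im ≠ 0 → z ≠ 0 := fun z h h' => h (by simp [h'])
  have hne' : ∀ z : ℂ, z.re ≠ 0 → z ≠ 0 := fun z h h' => h (by simp [h'])
  rw [key (fun x => (x : ℂ) + ((-c : ℝ) : ℂ) * I) α β (by fun_prop)
      (fun x hx => by simpa [Complex.mem_reProdIm] using hx) (fun x _ => hne _ (by simpa using hc.ne')),
    key (fun x => (x : ℂ) + (c : ℂ) * I) α β (by fun_prop)
      (fun x hx => by simpa [Complex.mem_reProdIm] using hx) (fun x _ => hne _ (by simpa using hc.ne')),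
    key (fun y => (β : ℂ) + (y : ℂ) * I) (-c) c (by fun_prop)
      (fun x hx => by simpa [Complex.mem_reProdIm] using hx) (fun x _ => hne' _ (by simp; linarith)),
    key (fun y => (α : ℂ) + (y : ℂ) * I) (-c) c (by fun_prop)
      (fun x hx => by simpa [Complex.mem_reProdIm] using hx) (fun x _ => hne' _ (by simp; linarith))]
  have := rect_inv α β c q h1 h2 hc
  linear_combination H0 + g q * this

noncomputable def bf (a : ℝ) (s : ℂ) : ℂ :=
  Complex.exp (((a : ℂ) + 1) * s) / (Complex.cosh (Complex.exp s) * Complex.cos (Complex.exp s))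

noncomputable def br (a : ℝ) (n : ℕ) : ℝ :=
  (-1 : ℝ) ^ n * ((n + 1 / 2) * π) ^ a / Real.cosh ((n + 1 / 2) * π)

lemma exp_re_pos' (s : ℂ) (hs : |s.im| ≤ π / 4) : 0 < (Complex.exp s).re := by
  rw [Complex.exp_re]
  have := abs_le.1 hs
  have hp := Real.pi_pos
  exact mul_pos (Real.exp_pos _) (Real.cos_pos_of_mem_Ioo ⟨by linarith, by linarith⟩)

lemma cosh_ne (w : ℂ) (hw : 0 < w.re) : Complex.cosh w ≠ 0 := by
  intro h
  rw [← Complex.cos_mul_I, Complex.cos_eq_zero_iff] at h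
  obtain ⟨k, hk⟩ := h
  have := congrArg Complex.im hk
  have e : ((2 * (k : ℂ) + 1) * π / 2) = (((2 * (k : ℝ) + 1) * π / 2 : ℝ) : ℂ) := by push_cast; ring
  rw [e, Complex.ofReal_im] at this
  simp at this
  linarith

lemma cos_zero_loc (s : ℂ) (n : ℕ) (hs : |s.im| ≤ π / 4) (h1 : ((n : ℝ) - 1 / 2) * π < Real.exp s.re)
    (h2 : Real.exp s.re < ((n : ℝ) + 3 / 2) * π) (h : Complex.cos (Complex.exp s) = 0) :
    s = (Real.log ((n + 1 / 2) * π) : ℝ) := by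
  have hp := Real.pi_pos
  have hpos := exp_re_pos' s hs
  rw [Complex.cos_eq_zero_iff] at h
  obtain ⟨k, hk⟩ := h
  have e : ((2 * (k : ℂ) + 1) * π / 2) = (((k + 1 / 2 : ℝ) * π : ℝ) : ℂ) := by push_cast; ring
  rw [e] at hk
  have hkpos : 0 < ((k + 1 / 2 : ℝ) * π) := by rw [hk, Complex.ofReal_re] at hpos; exact hpos
  have hnorm : Real.exp s.re = (k + 1 / 2 : ℝ) * π := by
    rw [← Complex.norm_exp, hk, Complex.norm_of_nonneg hkpos.le]
  have hb := abs_le.1 hs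
  have hs' : s = Complex.log (Complex.exp s) := (Complex.log_exp (by linarith) (by linarith)).symm
  rw [hnorm] at h1 h2
  have h1' := lt_of_mul_lt_mul_right h1 hp.le
  have h2' := lt_of_mul_lt_mul_right h2 hp.le
  have hkn : k = n := by
    have a1 : (n : ℝ) < k + 1 := by linarith
    have a2 : (k : ℝ) < n + 1 := by linarith
    have a1' : (n : ℤ) < k + 1 := by exact_mod_cast a1
    have a2' : k < (n : ℤ) + 1 := by exact_mod_cast a2
    omega
  rw [hs', hk, ← Complex.ofReal_log hkpos.le, hkn]
  simp

lemma slice (a t1 t2 : ℝ) (n : ℕ) (h1 : ((n : ℝ) - 1 / 2) * π < Real.exp t1)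
    (h2 : Real.exp t1 < ((n : ℝ) + 1 / 2) * π) (h3 : ((n : ℝ) + 1 / 2) * π < Real.exp t2)
    (h4 : Real.exp t2 < ((n : ℝ) + 3 / 2) * π) :
    (∫ x in t1..t2, bf a ((x : ℂ) + ((-(π / 4) : ℝ) : ℂ) * I))
     - (∫ x in t1..t2, bf a ((x : ℂ) + ((π / 4 : ℝ) : ℂ) * I))
    + I * (∫ y in (-(π / 4))..(π / 4), bf a ((t2 : ℂ) + (y : ℂ) * I))
    - I * (∫ y in (-(π / 4))..(π / 4), bf a ((t1 : ℂ) + (y : ℂ) * I))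
     = - (2 * π * I * br a n) := by
  have hp := Real.pi_pos
  set Y : ℝ := ((n : ℝ) + 1 / 2) * π with hY
  have hYpos : 0 < Y := by positivity
  set q := Real.log Y with hq
  have hq1 : t1 < q := by rwa [hq, Real.lt_log_iff_exp_lt hYpos]
  have hq2 : q < t2 := by rwa [hq, Real.log_lt_iff_lt_exp hYpos]
  have hexpq : Complex.exp (q : ℂ) = Y := by rw [← Complex.ofReal_exp, hq, Real.exp_log hYpos]
  have hcosY : Real.cos Y = 0 := by
    rw [Real.cos_eq_zero_iff]; exact ⟨n, by push_cast; rw [hY]; ring⟩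
  have hsinY : Real.sin Y = (-1) ^ n := by
    have : Y = n * π + π / 2 := by rw [hY]; ring
    rw [this, Real.sin_add_pi_div_two, Real.cos_nat_mul_pi]
  let k : ℂ → ℂ := fun s => Complex.cos (Complex.exp s)
  have hkd : Differentiable ℂ k := by fun_prop
  have hkq : k q = 0 := by
    simp only [k]; rw [hexpq, ← Complex.ofReal_cos, hcosY]; simp
  have hkder : dslope k q q = -((-1) ^ n * Y) := by
    rw [dslope_same]
    have : HasDerivAt k (-Complex.sin (Complex.exp q) * Complex.exp q) q :=
      (Complex.hasDerivAt_exp (q : ℂ)).ccos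
    rw [this.deriv, hexpq, ← Complex.ofReal_sin, hsinY]; push_cast; ring
  have hds : Differentiable ℂ (dslope k q) := by
    rw [← differentiableOn_univ]
    exact (Complex.differentiableOn_dslope Filter.univ_mem).2 hkd.differentiableOn
  let g : ℂ → ℂ := fun s => Complex.exp (((a : ℂ) + 1) * s) / (Complex.cosh (Complex.exp s) * dslope k q s)
  have hbf : ∀ s, bf a s = g s * (s - q)⁻¹ := by
    intro s
    by_cases hs : s = q
    · subst hs
      have : Complex.cos (Complex.exp q) = 0 := hkq
      simp [bf, this]
    · simp only [bf, g]
      rw [dslope_of_ne _ hs, slope_def_field, hkq, sub_zero]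
      have : s - q ≠ 0 := sub_ne_zero.2 hs
      simp only [k]
      field_simp
  simp only [hbf]
  have hgd : DifferentiableOn ℂ g (Set.uIcc t1 t2 ×ℂ Set.uIcc (-(π / 4)) (π / 4)) := by
    intro s hs
    rw [Complex.mem_reProdIm, Set.uIcc_of_le (by linarith), Set.uIcc_of_le (by linarith)] at hs
    have him : |s.im| ≤ π / 4 := abs_le.2 hs.2
    have hc := cosh_ne _ (exp_re_pos' s him)
    have hd : dslope k q s ≠ 0 := by
      by_cases hsq : s = q
      · rw [hsq, hkder]
        have : (Y : ℂ) ≠ 0 := by exact_mod_cast hYpos.ne'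
        simp [this]
      · rw [dslope_of_ne _ hsq, slope_def_field, hkq, sub_zero]
        refine div_ne_zero (fun h0 => hsq ?_) (sub_ne_zero.2 hsq)
        refine cos_zero_loc s n him (h1.trans_le ?_) (lt_of_le_of_lt ?_ h4) h0
        · exact Real.exp_le_exp.2 hs.1.1
        · exact Real.exp_le_exp.2 hs.1.2
    apply DifferentiableAt.differentiableWithinAt
    refine DifferentiableAt.div (by fun_prop) ?_ (mul_ne_zero hc hd)
    exact DifferentiableAt.mul (by fun_prop) hds.differentiableAt
  rw [rect_res g t1 t2 (π / 4) q hq1 hq2 (by positivity) hgd]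
  have hgq : g q = -(br a n : ℂ) := by
    simp only [g, br]
    rw [hkder, hexpq, ← Complex.ofReal_cosh]
    have hch : (Real.cosh Y : ℂ) ≠ 0 := by exact_mod_cast (Real.cosh_pos Y).ne'
    have hY0 : (Y : ℂ) ≠ 0 := by exact_mod_cast hYpos.ne'
    have e1 : Complex.exp (((a : ℂ) + 1) * q) = ((Y ^ a : ℝ) : ℂ) * Y := by
      rw [Real.rpow_def_of_pos hYpos, ← hq]
      rw [add_mul, Complex.exp_add, one_mul, hexpq]
      push_cast; congr 2; ring
    rw [e1]
    have hm : ((-1 : ℂ) ^ n) * (-1) ^ n = 1 := by rw [← mul_pow]; simp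
    have hm0 : ((-1 : ℂ) ^ n) ≠ 0 := by simp
    rw [← hY]
    push_cast
    push_cast at hch
    field_simp
    linear_combination (((Y ^ a : ℝ) : ℂ)) * hm
  rw [hgq]; ring

lemma one_add_sq_le_cosh (x : ℝ) : 1 + x ^ 2 / 2 ≤ Real.cosh x := by
  have h : Real.cosh x = 1 + 2 * Real.sinh (x / 2) ^ 2 := by
    have := Real.cosh_two_mul (x / 2)
    rw [show 2 * (x / 2) = x by ring, Real.cosh_sq] at this
    linarith
  have h2 : (x / 2) ^ 2 ≤ Real.sinh (x / 2) ^ 2 := by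
    rw [sq_le_sq]
    rcases le_total 0 (x / 2) with h0 | h0
    · have := Real.self_le_sinh_iff.2 h0
      rw [abs_of_nonneg h0, abs_of_nonneg (h0.trans this)]; exact this
    · have := Real.sinh_le_self_iff.2 h0
      rw [abs_of_nonpos h0, abs_of_nonpos (this.trans h0)]; linarith
  rw [h]; nlinarith

lemma den_two (x : ℝ) : 2 ≤ Real.cos x + Real.cosh x := by
  have := one_add_sq_le_cosh x
  have := Real.one_sub_sq_div_two_le_cos (x := x)
  linarith

lemma den_exp (x : ℝ) : Real.exp x / 3 ≤ Real.cos x + Real.cosh x := by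
  have := den_two x
  have h1 := Real.neg_one_le_cos x
  have h2 : Real.exp x / 2 ≤ Real.cosh x := by
    rw [Real.cosh_eq]; have := Real.exp_pos (-x); linarith
  linarith

noncomputable def bi (a : ℝ) (x : ℝ) : ℝ := x ^ a / (Real.cos x + Real.cosh x)

lemma bi_cont (a : ℝ) (ha : 0 < a) : Continuous (bi a) := by
  refine Continuous.div (continuous_id.rpow_const fun x => Or.inr ha.le) (by fun_prop) ?_
  intro x
  have := den_two x
  linarith

lemma bi_int (a : ℝ) (ha : 0 < a) : MeasureTheory.IntegrableOn (bi a) (Set.Ioi 0) := by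
  have h := (Real.GammaIntegral_convergent (s := a + 1) (by linarith)).const_mul 3
  refine MeasureTheory.Integrable.mono' h (bi_cont a ha).aestronglyMeasurable ?_
  filter_upwards [MeasureTheory.ae_restrict_mem measurableSet_Ioi] with x hx
  have hx : 0 < x := hx
  have h0 := den_exp x
  have h2 := den_two x
  have hr := Real.rpow_nonneg hx.le a
  rw [bi, Real.norm_of_nonneg (div_nonneg hr (by linarith)), add_sub_cancel_right]
  rw [div_le_iff₀ (by linarith)]
  calc x ^ a = 3 * (Real.exp (-x) * x ^ a) * (Real.exp x / 3) := by
        rw [Real.exp_neg]; field_simp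
    _ ≤ _ := by gcongr

lemma trig_id (x : ℂ) (w : ℂ) (h : w + w * I = x ∨ w - w * I = x) :
    Complex.cosh w * Complex.cos w = (Complex.cos x + Complex.cosh x) / 2 := by
  have hI := Complex.I_sq
  have h3 : Complex.cosh w * Complex.cos w
     = (Complex.cos (w + w * I) + Complex.cos (w - w * I)) / 2 := by
    rw [Complex.cos_add, Complex.cos_sub, Complex.cos_mul_I]; ring
  rw [h3]
  rcases h with h | h
  · rw [h, ← Complex.cos_mul_I x, ← Complex.cos_neg (w - w * I)]
    congr 3; rw [← h]; linear_combination (-w) * hI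
  · rw [h, ← Complex.cos_mul_I x, add_comm]
    congr 3; rw [← h]; linear_combination (w) * hI

lemma log_one_add_I : Complex.log (1 + I) = Real.log (Real.sqrt 2) + (π / 4 : ℝ) * I := by
  have e : (1 + I : ℂ) = Complex.exp (Real.log (Real.sqrt 2) + (π / 4 : ℝ) * I) := by
    have h2 : 0 < Real.sqrt 2 := by positivity
    rw [Complex.exp_add_mul_I, ← Complex.ofReal_exp, Real.exp_log h2, ← Complex.ofReal_cos,
      ← Complex.ofReal_sin, Real.cos_pi_div_four, Real.sin_pi_div_four]
    have : ((Real.sqrt 2 : ℝ) : ℂ) ^ 2 = 2 := by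
      rw [← Complex.ofReal_pow, Real.sq_sqrt (by norm_num)]; simp
    push_cast
    linear_combination (-1/2 * (1 + I)) * this
  have hp := Real.pi_pos
  rw [e, Complex.log_exp] <;> simp <;> linarith

lemma bf_low (a t : ℝ) :
    bf a ((t : ℂ) + ((-(π / 4) : ℝ) : ℂ) * I) = 2 * Complex.exp (-(((a : ℂ) + 1) * Complex.log (1 + I)))
      * ((bi a (Real.sqrt 2 * Real.exp t) * (Real.sqrt 2 * Real.exp t) : ℝ) : ℂ) := by
  have h2 : 0 < Real.sqrt 2 := by positivity
  have hs2 : ((Real.sqrt 2 : ℝ) : ℂ) ^ 2 = 2 := by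
    rw [← Complex.ofReal_pow, Real.sq_sqrt (by norm_num)]; simp
  set x : ℝ := Real.sqrt 2 * Real.exp t with hx
  have hxpos : 0 < x := by positivity
  have hlogx : Real.log x = Real.log (Real.sqrt 2) + t := by
    rw [hx, Real.log_mul h2.ne' (Real.exp_pos t).ne', Real.log_exp]
  have hw : Complex.exp ((t : ℂ) + ((-(π / 4) : ℝ) : ℂ) * I) = x * (1 - I) / 2 := by
    rw [Complex.exp_add_mul_I, ← Complex.ofReal_exp, ← Complex.ofReal_cos,
      ← Complex.ofReal_sin, Real.cos_neg, Real.sin_neg, Real.cos_pi_div_four, Real.sin_pi_div_four, hx]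
    push_cast; ring
  have hxa : ((x ^ a : ℝ) : ℂ) * x = Complex.exp ((a + 1) * (Real.log (Real.sqrt 2) + t)) := by
    have : x ^ a * x = Real.exp ((a + 1) * (Real.log (Real.sqrt 2) + t)) := by
      rw [← hlogx, add_mul, Real.exp_add, one_mul, Real.exp_log hxpos, Real.rpow_def_of_pos hxpos, mul_comm a]
    rw [← Complex.ofReal_mul, this]; push_cast; rfl
  have hden : (Complex.cos x + Complex.cosh x) ≠ 0 := by
    have := den_two x
    have h : Real.cos x + Real.cosh x ≠ 0 := by linarith
    exact_mod_cast h
  rw [bf, hw, trig_id x _ (Or.inl (by linear_combination (-(x : ℂ) / 2) * Complex.I_sq)), log_one_add_I, bi]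
  have : Complex.exp (((a : ℂ) + 1) * ((t : ℂ) + ((-(π / 4) : ℝ) : ℂ) * I))
    = Complex.exp (-(((a : ℂ) + 1) * (Real.log (Real.sqrt 2) + (π / 4 : ℝ) * I))) * (((x ^ a : ℝ) : ℂ) * x) := by
    rw [hxa, ← Complex.exp_add]; congr 1; push_cast; ring
  rw [this]
  push_cast
  field_simp

lemma bf_high (a t : ℝ) :
    bf a ((t : ℂ) + ((π / 4 : ℝ) : ℂ) * I) =
      I ^ ((a : ℂ) + 1) * bf a ((t : ℂ) + ((-(π / 4) : ℝ) : ℂ) * I) := by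
  have e1 : Complex.exp ((t : ℂ) + ((π / 4 : ℝ) : ℂ) * I)
      = I * Complex.exp ((t : ℂ) + ((-(π / 4) : ℝ) : ℂ) * I) := by
    nth_rw 2 [← Complex.exp_pi_div_two_mul_I]
    rw [← Complex.exp_add]; congr 1; push_cast; ring
  rw [bf, bf, e1]
  have e2 : ∀ w : ℂ, Complex.cosh (I * w) * Complex.cos (I * w) = Complex.cosh w * Complex.cos w := by
    intro w
    rw [mul_comm I, Complex.cosh_mul_I, Complex.cos_mul_I, mul_comm]
  rw [e2, Complex.cpow_def_of_ne_zero Complex.I_ne_zero, Complex.log_I, ← mul_div_assoc, ← Complex.exp_add]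
  congr 2; push_cast; ring

lemma horiz (a t1 t2 : ℝ) (ha : 0 < a) :
    (∫ x in t1..t2, bf a ((x : ℂ) + ((-(π / 4) : ℝ) : ℂ) * I))
     - (∫ x in t1..t2, bf a ((x : ℂ) + ((π / 4 : ℝ) : ℂ) * I)) =
     (1 - I ^ ((a : ℂ) + 1)) * (2 * Complex.exp (-(((a : ℂ) + 1) * Complex.log (1 + I)))) *
      ((∫ x in (Real.sqrt 2 * Real.exp t1)..(Real.sqrt 2 * Real.exp t2), bi a x : ℝ) : ℂ) := by
  have hcv := intervalIntegral.integral_comp_mul_deriv (a := t1) (b := t2)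
    (f := fun t => Real.sqrt 2 * Real.exp t) (f' := fun t => Real.sqrt 2 * Real.exp t) (g := bi a)
    (fun x _ => (Real.hasDerivAt_exp x).const_mul _) (by fun_prop) (bi_cont a ha)
  simp only [bf_high, intervalIntegral.integral_const_mul]
  simp only [bf_low, intervalIntegral.integral_const_mul]
  rw [← hcv, intervalIntegral.integral_ofReal]
  simp only [Function.comp]
  ring

lemma norm_bf_num (a t y : ℝ) : ‖Complex.exp (((a : ℂ) + 1) * ((t : ℂ) + (y : ℂ) * I))‖ = Real.exp ((a + 1) * t) := by
  rw [Complex.norm_exp]; congr 1; simp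

open Filter Topology in
lemma vert_left (a : ℝ) (ha : 0 < a) :
    Tendsto (fun N : ℕ => ∫ y in (-(π / 4))..(π / 4), bf a (((-(N : ℝ) : ℝ) : ℂ) + (y : ℂ) * I)) atTop (𝓝 0) := by
  have hlim : Tendsto (fun N : ℕ => Real.exp (-(N : ℝ))) atTop (𝓝 0) :=
    Real.tendsto_exp_neg_atTop_nhds_zero.comp tendsto_natCast_atTop_atTop
  have hc : Continuous (fun w : ℂ => ‖Complex.cosh w * Complex.cos w‖) := by fun_prop
  have h0 : ∀ᶠ w : ℂ in 𝓝 0, 1 / 2 < ‖Complex.cosh w * Complex.cos w‖ :=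
    hc.continuousAt.eventually (lt_mem_nhds (by simp; norm_num))
  obtain ⟨δ, hδ, hb⟩ := Metric.eventually_nhds_iff.1 h0
  have hg : Tendsto (fun N : ℕ => 2 * Real.exp (-(N : ℝ)) * |π / 4 - -(π / 4)|) atTop (𝓝 0) := by
    simpa using (hlim.const_mul 2).mul_const (|π / 4 - -(π / 4)|)
  refine squeeze_zero_norm' ?_ hg
  filter_upwards [hlim.eventually (gt_mem_nhds hδ)] with N hN
  apply intervalIntegral.norm_integral_le_of_norm_le_const
  intro y _
  have h1 : 1 / 2 < ‖Complex.cosh (Complex.exp (((-(N : ℝ) : ℝ) : ℂ) + (y : ℂ) * I)) * Complex.cos (Complex.exp (((-(N : ℝ) : ℝ) : ℂ) + (y : ℂ) * I))‖ := by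
    apply hb
    rw [dist_zero_right, Complex.norm_exp]
    simpa using hN
  rw [bf, norm_div, norm_bf_num, div_le_iff₀ (by linarith)]
  have h2 : Real.exp ((a + 1) * -(N : ℝ)) ≤ Real.exp (-(N : ℝ)) := by
    apply Real.exp_le_exp.2
    have : 0 ≤ a * (N : ℝ) := by positivity
    linarith
  have := Real.exp_pos (-(N : ℝ))
  nlinarith

lemma cosh_lower (w : ℂ) (h : 1 ≤ w.re) : Real.exp w.re / 4 ≤ ‖Complex.cosh w‖ := by
  have h1 : ‖Complex.exp w‖ - ‖Complex.exp (-w)‖ ≤ ‖Complex.exp w + Complex.exp (-w)‖ := by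
    have := norm_sub_norm_le (Complex.exp w) (-Complex.exp (-w))
    simpa using this
  rw [Complex.norm_exp, Complex.norm_exp, Complex.neg_re] at h1
  have h2 : ‖Complex.cosh w‖ = ‖Complex.exp w + Complex.exp (-w)‖ / 2 := by
    rw [Complex.cosh, norm_div]; simp
  have h3 : Real.exp (-w.re) ≤ 1 := Real.exp_le_one_iff.2 (by linarith)
  have h4 := Real.add_one_le_exp w.re
  rw [h2]; linarith

lemma cos_lower (w : ℂ) (N : ℕ) (hN : 1 ≤ N) (hw : w.re ^ 2 + w.im ^ 2 = (N * π) ^ 2) (hre : 0 < w.re) :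
    1 / 2 ≤ ‖Complex.cos w‖ := by
  set u := w.re
  set v := w.im
  have hw' : w = (u : ℂ) + v * I := (Complex.re_add_im w).symm
  have hp := Real.pi_gt_three
  have hM : 3 ≤ N * π := by
    have : (1 : ℝ) ≤ N := by exact_mod_cast hN
    nlinarith
  have hcos : Complex.cos w = ((Real.cos u * Real.cosh v : ℝ) : ℂ) + ((-(Real.sin u * Real.sinh v) : ℝ) : ℂ) * I := by
    rw [hw', Complex.cos_add_mul_I]; push_cast; ring
  have hsq : ‖Complex.cos w‖ ^ 2 = (Real.cos u * Real.cosh v) ^ 2 + (Real.sin u * Real.sinh v) ^ 2 := by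
    rw [Complex.sq_norm, hcos, Complex.normSq_add_mul_I]; ring
  have hsc := Real.sin_sq_add_cos_sq u
  have hcs := Real.cosh_sq v
  have hsq2 : ‖Complex.cos w‖ ^ 2 = Real.cos u ^ 2 + Real.sinh v ^ 2 := by
    rw [hsq, mul_pow, mul_pow, hcs]; linear_combination Real.sinh v ^ 2 * hsc
  have hfin : (1 / 2) ^ 2 ≤ ‖Complex.cos w‖ ^ 2 := by
    rw [hsq2]
    by_cases hv : 1 ≤ v ^ 2
    · have : v ^ 2 ≤ Real.sinh v ^ 2 := by
        have := one_add_sq_le_cosh v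
        rw [← sub_nonneg]
        nlinarith [sq_nonneg v, sq_nonneg (v^2)]
      nlinarith [sq_nonneg (Real.cos u)]
    · have hd1 : (N * π - u) * (N * π + u) = v ^ 2 := by linear_combination -hw
      have hd2 : 0 ≤ N * π - u := by
        by_contra hneg
        push Not at hneg
        nlinarith [sq_nonneg v]
      have hd3 : N * π - u ≤ 1 / 3 := by nlinarith
      have h1 := Real.one_sub_sq_div_two_le_cos (x := N * π - u)
      have h2 : 1 / 2 ≤ Real.cos (N * π - u) := by nlinarith
      rw [Real.cos_nat_mul_pi_sub] at h2
      have h3 : Real.cos u ^ 2 = ((-1) ^ N * Real.cos u) ^ 2 := by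
        rw [mul_pow, ← pow_mul, mul_comm N 2, pow_mul]; simp
      rw [h3]
      nlinarith [sq_nonneg (Real.sinh v)]
  exact (sq_le_sq₀ (by norm_num) (norm_nonneg _)).1 hfin

open Filter Topology in
lemma vert_right (a : ℝ) :
    Tendsto (fun N : ℕ => ∫ y in (-(π / 4))..(π / 4), bf a (((Real.log (((N + 1 : ℕ) : ℝ) * π) : ℝ) : ℂ) + (y : ℂ) * I)) atTop (𝓝 0) := by
  have hp := Real.pi_gt_three
  have hp2 := Real.pi_lt_d2
  have hlim : Tendsto (fun N : ℕ => ((N + 1 : ℕ) : ℝ) * π) atTop atTop :=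
    (tendsto_natCast_atTop_atTop.comp (tendsto_add_atTop_nat 1)).atTop_mul_const Real.pi_pos
  have hg : Tendsto (fun N : ℕ => 8 * ((((N + 1 : ℕ) : ℝ) * π) ^ (a + 1) * Real.exp (-(1/2) * (((N + 1 : ℕ) : ℝ) * π))) * |π / 4 - -(π / 4)|) atTop (𝓝 0) := by
    have := ((tendsto_rpow_mul_exp_neg_mul_atTop_nhds_zero (a + 1) (1/2) (by norm_num)).comp hlim)
    simpa using (this.const_mul 8).mul_const (|π / 4 - -(π / 4)|)
  refine squeeze_zero_norm ?_ hg
  intro N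
  apply intervalIntegral.norm_integral_le_of_norm_le_const
  intro y hy
  rw [Set.uIoc_of_le (by linarith)] at hy
  set M : ℝ := ((N + 1 : ℕ) : ℝ) * π with hM
  have hM3 : 3 ≤ M := by
    have : (1 : ℝ) ≤ ((N + 1 : ℕ) : ℝ) := by exact_mod_cast Nat.le_add_left 1 N
    nlinarith
  have hMpos : 0 < M := by linarith
  set w := Complex.exp (((Real.log M : ℝ) : ℂ) + (y : ℂ) * I) with hw
  have hre : w.re = M * Real.cos y := by rw [hw, Complex.exp_re]; simp [Real.exp_log hMpos]
  have him : w.im = M * Real.sin y := by rw [hw, Complex.exp_im]; simp [Real.exp_log hMpos]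
  have hcy : 1 / 2 ≤ Real.cos y := by
    have := Real.one_sub_sq_div_two_le_cos (x := y)
    have h1 : y ^ 2 ≤ 1 := by
      rw [sq_le_one_iff_abs_le_one, abs_le]; constructor <;> linarith [hy.1, hy.2]
    linarith
  have hre2 : M / 2 ≤ w.re := by rw [hre]; nlinarith
  have hch := cosh_lower w (by linarith)
  have hcos := cos_lower w (N + 1) (by omega) (by
    rw [hre, him, ← hM]; linear_combination M ^ 2 * Real.sin_sq_add_cos_sq y) (by linarith)
  have hch2 : Real.exp (M / 2) / 4 ≤ ‖Complex.cosh w‖ := by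
    have := Real.exp_le_exp.2 hre2; linarith
  have hprod : Real.exp (M / 2) / 8 ≤ ‖Complex.cosh w * Complex.cos w‖ := by
    rw [norm_mul]
    calc Real.exp (M / 2) / 8 = Real.exp (M / 2) / 4 * (1 / 2) := by ring
      _ ≤ _ := by gcongr
  have hep := Real.exp_pos (M / 2)
  rw [bf, norm_div, norm_bf_num, ← hw, div_le_iff₀ (by linarith)]
  have e1 : Real.exp ((a + 1) * Real.log M) = M ^ (a + 1) := by
    rw [Real.rpow_def_of_pos hMpos, mul_comm]
  have e2 : Real.exp (-(1/2) * M) = (Real.exp (M / 2))⁻¹ := by rw [← Real.exp_neg]; congr 1; ring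
  rw [e1, e2]
  have hr := Real.rpow_nonneg hMpos.le (a + 1)
  calc M ^ (a + 1) = 8 * (M ^ (a + 1) * (Real.exp (M / 2))⁻¹) * (Real.exp (M / 2) / 8) := by field_simp
    _ ≤ _ := by gcongr

lemma br_summable (a : ℝ) (ha : 0 < a) : Summable (br a) := by
  have hlim := (tendsto_rpow_mul_exp_neg_mul_atTop_nhds_zero a (1/2) (by norm_num))
  have hy : Filter.Tendsto (fun n : ℕ => ((n : ℝ) + 1 / 2) * π) Filter.atTop Filter.atTop :=
    (Filter.tendsto_atTop_add_const_right _ _ tendsto_natCast_atTop_atTop).atTop_mul_const Real.pi_pos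
  have hev := (hlim.comp hy).eventually (gt_mem_nhds (zero_lt_one))
  have hs : Summable (fun n : ℕ => 2 * Real.exp (-(n : ℝ))) := (Real.summable_exp_neg_nat).mul_left 2
  apply summable_of_isBigO_nat hs
  apply Asymptotics.IsBigO.of_bound 1
  filter_upwards [hev] with n hn
  simp only [Function.comp] at hn
  have hp := Real.pi_gt_three
  have hn0 : (0 : ℝ) ≤ n := by positivity
  set Y : ℝ := ((n : ℝ) + 1 / 2) * π with hY
  have hYpos : 0 < Y := by positivity
  have hYn : 2 * (n : ℝ) ≤ Y := by nlinarith
  have hr := Real.rpow_nonneg hYpos.le a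
  have hc : Real.exp Y / 2 ≤ Real.cosh Y := by
    rw [Real.cosh_eq]; have := Real.exp_pos (-Y); linarith
  have hcp := Real.cosh_pos Y
  rw [br, ← hY, norm_div, norm_mul, norm_pow, norm_neg, norm_one, one_pow, one_mul, one_mul,
    Real.norm_of_nonneg hr, Real.norm_of_nonneg hcp.le, Real.norm_of_nonneg (by positivity), div_le_iff₀ hcp]
  have e : Real.exp Y = Real.exp (Y / 2) * Real.exp (Y / 2) := by rw [← Real.exp_add]; congr 1; ring
  have e2 : Real.exp (-(1/2) * Y) * Real.exp (Y / 2) = 1 := by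
    rw [← Real.exp_add]; ring_nf; exact Real.exp_zero
  have e3 : 1 ≤ Real.exp (-(n : ℝ)) * Real.exp (Y / 2) := by
    rw [← Real.exp_add]; exact Real.one_le_exp (by linarith)
  have hE := Real.exp_pos (Y / 2)
  calc Y ^ a = (Y ^ a * Real.exp (-(1/2) * Y)) * Real.exp (Y / 2) := by rw [mul_assoc, e2, mul_one]
    _ ≤ 1 * Real.exp (Y / 2) := by gcongr
    _ ≤ (Real.exp (-(n : ℝ)) * Real.exp (Y / 2)) * Real.exp (Y / 2) := by gcongr
    _ = 2 * Real.exp (-(n : ℝ)) * (Real.exp Y / 2) := by rw [e]; ring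
    _ ≤ _ := by gcongr

lemma finite_sum (a R : ℝ) (ha : 0 < a) (hR : 0 ≤ R) (N : ℕ) :
    (1 - I ^ ((a : ℂ) + 1)) * (2 * Complex.exp (-(((a : ℂ) + 1) * Complex.log (1 + I)))) *
      ((∫ x in (Real.sqrt 2 * Real.exp (-R))..(Real.sqrt 2 * Real.exp (Real.log (((N + 1 : ℕ) : ℝ) * π))), bi a x : ℝ) : ℂ)
    + I * (∫ y in (-(π / 4))..(π / 4), bf a (((Real.log (((N + 1 : ℕ) : ℝ) * π) : ℝ) : ℂ) + (y : ℂ) * I))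
    - I * (∫ y in (-(π / 4))..(π / 4), bf a (((-R : ℝ) : ℂ) + (y : ℂ) * I))
     = - (2 * π * I * ((∑ n ∈ Finset.range (N + 1), br a n : ℝ) : ℂ)) := by
  have hp := Real.pi_gt_three
  induction N with
  | zero =>
    rw [← horiz a _ _ ha]
    have h := slice a (-R) (Real.log (((0 + 1 : ℕ) : ℝ) * π)) 0
    rw [Real.exp_log (by simp; linarith)] at h
    have h1 : Real.exp (-R) ≤ 1 := Real.exp_le_one_iff.2 (by linarith)
    rw [h]
    · simp
    · have := Real.exp_pos (-R); push_cast; linarith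
    · push_cast; linarith
    · push_cast; linarith
    · push_cast; linarith
  | succ N ih =>
    have h := slice a (Real.log (((N + 1 : ℕ) : ℝ) * π)) (Real.log (((N + 1 + 1 : ℕ) : ℝ) * π)) (N + 1)
    have hpos1 : 0 < ((N + 1 : ℕ) : ℝ) * π := by positivity
    have hpos2 : 0 < ((N + 1 + 1 : ℕ) : ℝ) * π := by positivity
    rw [Real.exp_log hpos1, Real.exp_log hpos2, horiz a _ _ ha] at h
    have h' := h (by push_cast; nlinarith) (by push_cast; nlinarith) (by push_cast; nlinarith) (by push_cast; nlinarith)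
    rw [Finset.sum_range_succ]
    have hadd := intervalIntegral.integral_add_adjacent_intervals (μ := MeasureTheory.volume)
      ((bi_cont a ha).intervalIntegrable (Real.sqrt 2 * Real.exp (-R)) (Real.sqrt 2 * Real.exp (Real.log (((N + 1 : ℕ) : ℝ) * π))))
      ((bi_cont a ha).intervalIntegrable _ (Real.sqrt 2 * Real.exp (Real.log (((N + 1 + 1 : ℕ) : ℝ) * π))))
    rw [← hadd, Complex.ofReal_add, Complex.ofReal_add]
    linear_combination ih + h'

open Filter Topology in
lemma main_lim (a : ℝ) (ha : 0 < a) :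
    (1 - I ^ ((a : ℂ) + 1)) * (2 * Complex.exp (-(((a : ℂ) + 1) * Complex.log (1 + I)))) *
      ((∫ x in Set.Ioi (0 : ℝ), bi a x : ℝ) : ℂ) = - (2 * π * I * ((∑' n, br a n : ℝ) : ℂ)) := by
  have hsum := (br_summable a ha).hasSum.tendsto_sum_nat.comp (tendsto_add_atTop_nat 1)
  have hA : Tendsto (fun N : ℕ => Real.sqrt 2 * Real.exp (-(N : ℝ))) atTop (𝓝 0) := by
    simpa using (Real.tendsto_exp_neg_atTop_nhds_zero.comp tendsto_natCast_atTop_atTop).const_mul (Real.sqrt 2)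
  have hB : Tendsto (fun N : ℕ => Real.sqrt 2 * Real.exp (Real.log (((N + 1 : ℕ) : ℝ) * π))) atTop atTop := by
    have hlim : Tendsto (fun N : ℕ => ((N + 1 : ℕ) : ℝ) * π) atTop atTop :=
      (tendsto_natCast_atTop_atTop.comp (tendsto_add_atTop_nat 1)).atTop_mul_const Real.pi_pos
    refine (hlim.const_mul_atTop (show 0 < Real.sqrt 2 by positivity)).congr fun N => ?_
    rw [Real.exp_log (by positivity)]
  have hI1 := MeasureTheory.intervalIntegral_tendsto_integral_Ioi 0 (bi_int a ha) hB
  have hI2 : Tendsto (fun N : ℕ => ∫ x in (0 : ℝ)..(Real.sqrt 2 * Real.exp (-(N : ℝ))), bi a x) atTop (𝓝 0) := by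
    have hc : Continuous (fun b : ℝ => ∫ x in (0 : ℝ)..b, bi a x) :=
      intervalIntegral.continuous_primitive (fun _ _ => (bi_cont a ha).intervalIntegrable _ _) 0
    have := (hc.tendsto 0).comp hA
    simpa [Function.comp_def] using this
  have hI : Tendsto (fun N : ℕ => ∫ x in (Real.sqrt 2 * Real.exp (-(N : ℝ)))..(Real.sqrt 2 * Real.exp (Real.log (((N + 1 : ℕ) : ℝ) * π))), bi a x)
      atTop (𝓝 (∫ x in Set.Ioi (0 : ℝ), bi a x)) := by
    have := hI1.sub hI2
    rw [sub_zero] at this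
    refine this.congr fun N => ?_
    exact intervalIntegral.integral_interval_sub_left ((bi_cont a ha).intervalIntegrable _ _) ((bi_cont a ha).intervalIntegrable _ _)
  have hL := ((((Complex.continuous_ofReal.tendsto _).comp hI).const_mul
    ((1 - I ^ ((a : ℂ) + 1)) * (2 * Complex.exp (-(((a : ℂ) + 1) * Complex.log (1 + I)))))).add
    ((vert_right a).const_mul I)).sub ((vert_left a ha).const_mul I)
  have hR := ((((Complex.continuous_ofReal.tendsto _).comp hsum).const_mul (2 * π * I))).neg
  rw [mul_zero, sub_zero, add_zero] at hL
  refine tendsto_nhds_unique hL (hR.congr fun N => ?_)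
  exact (finite_sum a N ha (by positivity) N).symm

theorem berndt_integral_order_one_plus (a : ℝ) (ha : 0 < a) :
    (1 - Complex.I ^ ((a : ℂ) + 1)) / (1 + Complex.I) ^ ((a : ℂ) - 1) *
        ((∫ x in Set.Ioi (0 : ℝ), x ^ a / (Real.cos x + Real.cosh x) : ℝ) : ℂ)
      = 2 * (Real.pi : ℂ) ^ ((a : ℂ) + 1) *
        ((∑' n : ℕ, (-1 : ℝ) ^ n * ((2 * (n : ℝ) + 1) / 2) ^ a /
            Real.cosh (((2 * (n : ℝ) + 1) / 2) * Real.pi) : ℝ) : ℂ) := by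
  have h := main_lim a ha
  have hp := Real.pi_pos
  have hbr : ∑' n, br a n = π ^ a * ∑' n : ℕ, (-1 : ℝ) ^ n * ((2 * (n : ℝ) + 1) / 2) ^ a /
            Real.cosh (((2 * (n : ℝ) + 1) / 2) * Real.pi) := by
    rw [← tsum_mul_left]
    congr 1; ext n
    have e : (n : ℝ) + 1 / 2 = (2 * (n : ℝ) + 1) / 2 := by ring
    rw [br, e, Real.mul_rpow (by positivity) hp.le]; ring
  have hne : (1 + I : ℂ) ≠ 0 := fun h => by simpa using congrArg Complex.im h
  have hpa : (π : ℂ) ^ ((a : ℂ) + 1) = ((π ^ a : ℝ) : ℂ) * π := by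
    rw [Complex.cpow_add _ _ (by exact_mod_cast hp.ne'), Complex.cpow_one, Complex.ofReal_cpow hp.le]
  have hK : Complex.exp (-(((a : ℂ) + 1) * Complex.log (1 + I))) = ((1 + I) ^ ((a : ℂ) - 1))⁻¹ * (2 * I)⁻¹ := by
    have e2 : (2 * I : ℂ) = Complex.exp (2 * Complex.log (1 + I)) := by
      rw [two_mul (Complex.log _), Complex.exp_add, Complex.exp_log hne]
      linear_combination -Complex.I_sq
    rw [e2, Complex.cpow_def_of_ne_zero hne, ← Complex.exp_neg, ← Complex.exp_neg, ← Complex.exp_add]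
    congr 1; ring
  rw [hK, hbr, mul_inv] at h
  simp only [bi] at h
  rw [hpa, div_eq_mul_inv]
  rw [Complex.inv_I] at h
  rw [Complex.ofReal_mul] at h
  generalize ((1 + I : ℂ) ^ ((a : ℂ) - 1))⁻¹ = Z at h ⊢
  generalize (I ^ ((a : ℂ) + 1)) = W at h ⊢
  generalize (∫ x in Set.Ioi (0 : ℝ), x ^ a / (Real.cos x + Real.cosh x)) = J at h ⊢
  generalize (∑' n : ℕ, (-1 : ℝ) ^ n * ((2 * (n : ℝ) + 1) / 2) ^ a /
            Real.cosh (((2 * (n : ℝ) + 1) / 2) * Real.pi)) = S at h ⊢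
  linear_combination I * h + ((1 - W) * Z * J - 2 * π * ((π ^ a : ℝ) : ℂ) * S) * Complex.I_sq
end

section
/- For any real a ≥ 2, ((1 + i^{a+1})/(i(1+i)^{a-1})) · ∫₀^∞ x^a/(cos x - cosh x) dx = 2π^{a+1} · Σ_{n=1}^∞ (-1)^{n+1} n^a / sinh(nπ). -/
open Complex Real

lemma bz_norm (a : ℝ) (p : ℂ) (x : ℝ) (hx : 0 < x) :
    ‖((x ^ a : ℝ) : ℂ) * cexp (-(p * x))‖ = x ^ a * Real.exp (-p.re * x) := by
  rw [norm_mul, Complex.norm_exp, Complex.norm_real, Real.norm_of_nonneg (by positivity)]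
  simp

lemma bz_meas (a : ℝ) (p : ℂ) : MeasureTheory.AEStronglyMeasurable
    (fun x : ℝ => ((x ^ a : ℝ) : ℂ) * cexp (-(p * x)))
    (MeasureTheory.volume.restrict (Set.Ioi 0)) := by
  apply Measurable.aestronglyMeasurable
  fun_prop

lemma bz_rint (a : ℝ) (ha : 0 ≤ a) (r : ℝ) (hr : 0 < r) :
    MeasureTheory.IntegrableOn (fun x : ℝ => x ^ a * Real.exp (-r * x)) (Set.Ioi 0) := by
  have := integrableOn_rpow_mul_exp_neg_mul_rpow (p := 1) (s := a) (b := r) (by linarith)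
    one_pos hr
  simpa using this

lemma bz_int (a : ℝ) (ha : 0 ≤ a) (p : ℂ) (hp : 0 < p.re) :
    MeasureTheory.IntegrableOn (fun x : ℝ => ((x ^ a : ℝ) : ℂ) * cexp (-(p * x)))
      (Set.Ioi 0) := by
  refine MeasureTheory.Integrable.mono' (bz_rint a ha p.re hp) (bz_meas a p) ?_
  refine (MeasureTheory.ae_restrict_iff' measurableSet_Ioi).2 (Filter.Eventually.of_forall ?_)
  intro x hx
  exact (bz_norm a p x hx).le

lemma bz_deriv (a : ℝ) (ha : 0 ≤ a) (p : ℂ) (hp : 0 < p.re) :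
    DifferentiableAt ℂ (fun p : ℂ => ∫ x : ℝ in Set.Ioi 0, ((x ^ a : ℝ) : ℂ) * cexp (-(p * x))) p := by
  have key := hasDerivAt_integral_of_dominated_loc_of_deriv_le
    (μ := MeasureTheory.volume.restrict (Set.Ioi 0)) (𝕜 := ℂ)
    (F := fun (p : ℂ) (x : ℝ) => ((x ^ a : ℝ) : ℂ) * cexp (-(p * x)))
    (F' := fun (p : ℂ) (x : ℝ) => ((x ^ a : ℝ) : ℂ) * (cexp (-(p * x)) * (-(1 * (x:ℂ)))))
    (bound := fun x => x ^ (a+1) * Real.exp (-(p.re / 2) * x))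
    (x₀ := p) (s := Metric.ball p (p.re / 2)) (Metric.ball_mem_nhds p (by linarith))
    (Filter.Eventually.of_forall fun q => bz_meas a q) (bz_int a ha p hp)
    (by apply Measurable.aestronglyMeasurable; fun_prop) ?_
    (bz_rint (a+1) (by linarith) (p.re/2) (by linarith)) ?_
  · exact key.2.differentiableAt
  · refine (MeasureTheory.ae_restrict_iff' measurableSet_Ioi).2 (Filter.Eventually.of_forall ?_)
    intro x hx q hq
    have hx' : 0 < x := hx
    have h1 : p.re / 2 ≤ q.re := by
      have := (abs_re_le_norm (q - p)).trans (le_of_lt (by simpa [dist_eq_norm] using hq))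
      rw [abs_le, sub_re] at this
      linarith [this.1]
    rw [← mul_assoc, norm_mul, bz_norm a q x hx, Real.rpow_add hx', Real.rpow_one]
    have h2 : ‖-(1 * (x:ℂ))‖ = x := by simp [abs_of_pos hx']
    rw [h2]
    have : Real.exp (-q.re * x) ≤ Real.exp (-(p.re / 2) * x) := by
      apply Real.exp_le_exp.2; nlinarith
    have h3 : 0 < x ^ a := by positivity
    calc _ = x ^ a * x * Real.exp (-q.re * x) := by ring
      _ ≤ _ := by gcongr
  · refine Filter.Eventually.of_forall ?_
    intro x q hq
    exact ((((hasDerivAt_id q).mul_const (x:ℂ)).neg).cexp).const_mul _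

lemma bz_gamma (a : ℝ) (ha : 0 ≤ a) (p : ℂ) (hp : 0 < p.re) :
    ∫ x : ℝ in Set.Ioi 0, ((x ^ a : ℝ) : ℂ) * cexp (-(p * x))
      = (1 / p) ^ ((a + 1 : ℝ) : ℂ) * Complex.Gamma ((a + 1 : ℝ) : ℂ) := by
  have hopen : IsOpen {z : ℂ | 0 < z.re} := isOpen_lt continuous_const continuous_re
  have hconn : IsPreconnected {z : ℂ | 0 < z.re} := (convex_halfSpace_re_gt 0).isPreconnected
  have h1 : AnalyticOnNhd ℂ
      (fun p : ℂ => ∫ x : ℝ in Set.Ioi 0, ((x ^ a : ℝ) : ℂ) * cexp (-(p * x))) {z : ℂ | 0 < z.re} :=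
    DifferentiableOn.analyticOnNhd (fun z hz => (bz_deriv a ha z hz).differentiableWithinAt) hopen
  have h2 : AnalyticOnNhd ℂ
      (fun p : ℂ => (1 / p) ^ ((a + 1 : ℝ) : ℂ) * Complex.Gamma ((a + 1 : ℝ) : ℂ))
      {z : ℂ | 0 < z.re} := by
    refine DifferentiableOn.analyticOnNhd (fun z hz => ?_) hopen
    have hz' : 0 < z.re := hz
    have hz0 : z ≠ 0 := by rintro rfl; simp at hz'
    apply DifferentiableAt.differentiableWithinAt
    apply DifferentiableAt.mul_const
    apply DifferentiableAt.cpow_const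
    · have := differentiableAt_inv (𝕜 := ℂ) hz0
      convert! this using 1
      ext w; simp
    · left
      rw [one_div, inv_re]
      exact div_pos hz' (normSq_pos.2 hz0)
  refine h1.eqOn_of_preconnected_of_frequently_eq h2 hconn (z₀ := 1) (by simp) ?_ hp
  have hreal : ∀ r : ℝ, 0 < r → ∫ x : ℝ in Set.Ioi 0, ((x ^ a : ℝ) : ℂ) * cexp (-((r:ℂ) * x))
      = (1 / (r:ℂ)) ^ ((a + 1 : ℝ) : ℂ) * Complex.Gamma ((a + 1 : ℝ) : ℂ) := by
    intro r hr
    rw [← integral_cpow_mul_exp_neg_mul_Ioi (by simp; linarith) hr]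
    refine MeasureTheory.setIntegral_congr_fun measurableSet_Ioi (fun x hx => ?_)
    have hx' : (0:ℝ) < x := hx
    rw [Complex.ofReal_cpow hx'.le]
    push_cast; ring_nf
  have htend : Filter.Tendsto (fun n : ℕ => ((1 + 1 / ((n:ℝ) + 1) : ℝ) : ℂ)) Filter.atTop
      (nhdsWithin 1 {1}ᶜ) := by
    apply tendsto_nhdsWithin_of_tendsto_nhds_of_eventually_within
    · have := (tendsto_one_div_add_atTop_nhds_zero_nat (𝕜 := ℝ)).const_add 1
      have h := (Complex.continuous_ofReal.tendsto _).comp this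
      simpa [Function.comp_def] using h
    · refine Filter.Eventually.of_forall fun n => ?_
      have : (0:ℝ) < 1 / ((n:ℝ)+1) := by positivity
      simp only [Set.mem_compl_iff, Set.mem_singleton_iff]
      intro h
      have h' : (1 + 1 / ((n:ℝ) + 1) : ℝ) = 1 := by exact_mod_cast h
      linarith
  exact htend.frequently (Filter.Frequently.of_forall fun n => hreal _ (by positivity))

lemma bz_sumk (a : ℝ) (ha : 2 ≤ a) (c : ℝ) (C : ℂ) :
    Summable fun k : ℤ => (1 / ((c : ℂ) + I * (2 * k + 1))) ^ ((a + 1 : ℝ) : ℂ) * C := by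
  apply Summable.mul_right
  have h0 : Summable (fun k : ℤ => 1 / ((2 * k + 1 : ℤ) : ℝ) ^ 2) :=
    (Real.summable_one_div_int_pow (p := 2).2 (by norm_num)).comp_injective
      (i := fun k : ℤ => 2 * k + 1) (fun x y h => by simpa using h)
  refine Summable.of_norm_bounded h0 fun k => ?_
  have h1 : (1:ℝ) ≤ |((2 * k + 1 : ℤ) : ℝ)| := by
    have : (1:ℤ) ≤ |2 * k + 1| := Int.one_le_abs (by omega)
    exact_mod_cast this
  have h2 : |((2 * k + 1 : ℤ) : ℝ)| ≤ ‖(c : ℂ) + I * (2 * k + 1)‖ := by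
    have := abs_im_le_norm ((c : ℂ) + I * (2 * k + 1))
    simpa using this
  have h3 := h1.trans h2
  rw [norm_cpow_real, norm_div, norm_one, ← sq_abs ((2 * k + 1 : ℤ) : ℝ)]
  have h4 : (1 / ‖(c : ℂ) + I * (2 * k + 1)‖) ≤ 1 := by
    rw [div_le_one (by linarith)]; exact h3
  calc (1 / ‖(c : ℂ) + I * (2 * k + 1)‖) ^ (a + 1)
      ≤ (1 / ‖(c : ℂ) + I * (2 * k + 1)‖) ^ (2:ℝ) :=
        Real.rpow_le_rpow_of_exponent_ge (by positivity) h4 (by linarith)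
    _ = 1 / ‖(c : ℂ) + I * (2 * k + 1)‖ ^ 2 := by
        rw [Real.rpow_two, div_pow, one_pow]
    _ ≤ _ := by gcongr

open FourierTransform in
lemma bz_poisson (a : ℝ) (ha : 2 ≤ a) (c : ℝ) (hc : 0 < c) :
    ∑' k : ℤ, (1 / ((c : ℂ) + I * (2 * k + 1))) ^ ((a + 1 : ℝ) : ℂ)
        * Complex.Gamma ((a + 1 : ℝ) : ℂ)
      = π * ∑' n : ℕ, (((π * (n + 1)) ^ a * (-1) ^ (n + 1) * Real.exp (-c * (π * (n + 1))) : ℝ) : ℂ) := by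
  set f : ℝ → ℂ := fun t => (((max (π * t) 0) ^ a : ℝ) : ℂ) * cexp (-((c + I) * (π * t : ℝ))) with hf
  have hcont : Continuous f := by
    apply Continuous.mul
    · apply Complex.continuous_ofReal.comp
      apply Continuous.rpow_const (by fun_prop)
      intro x; right; linarith
    · fun_prop
  have hfneg : ∀ t ≤ 0, f t = 0 := by
    intro t ht
    have : max (π * t) 0 = 0 := max_eq_right (by nlinarith [Real.pi_pos])
    simp only [hf, this, Real.zero_rpow (by linarith : a ≠ 0)]
    simp
  have hfpos : ∀ t, 0 < t → f t = (((π * t) ^ a : ℝ) : ℂ) * cexp (-((c + I) * (π * t : ℝ))) := by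
    intro t ht
    have : max (π * t) 0 = π * t := max_eq_left (by positivity)
    simp only [hf, this]
  have hFT : ∀ k : ℤ, 𝓕 f (k : ℝ) = (π : ℂ)⁻¹ * ((1 / ((c : ℂ) + I * (2 * k + 1))) ^ ((a + 1 : ℝ) : ℂ)
        * Complex.Gamma ((a + 1 : ℝ) : ℂ)) := by
    intro k
    rw [Real.fourier_real_eq_integral_exp_smul, ← bz_gamma a (by linarith) _ (by simpa using hc)]
    have h1 := MeasureTheory.integral_comp_mul_left_Ioi
      (fun x : ℝ => ((x ^ a : ℝ) : ℂ) * cexp (-(((c : ℂ) + I * (2 * k + 1)) * x))) 0 Real.pi_pos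
    rw [mul_zero] at h1
    rw [show (π : ℂ)⁻¹ = ((π⁻¹ : ℝ) : ℂ) by push_cast; rfl, ← Complex.real_smul, ← h1]
    rw [← MeasureTheory.setIntegral_eq_integral_of_forall_compl_eq_zero (s := Set.Ioi (0:ℝ))]
    · refine MeasureTheory.setIntegral_congr_fun measurableSet_Ioi (fun x hx => ?_)
      have hx' : (0:ℝ) < x := hx
      simp only [smul_eq_mul]
      rw [hfpos x hx', mul_left_comm, ← Complex.exp_add]
      congr 2
      push_cast; ring
    · intro x hx
      rw [hfneg x (by simpa using hx), smul_zero]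
  have hdecay : f =O[Filter.cocompact ℝ] fun x : ℝ => |x| ^ (-(2:ℝ)) := by
    rw [cocompact_eq_atBot_atTop, Asymptotics.isBigO_sup]
    constructor
    · apply Asymptotics.IsBigO.of_bound 0
      filter_upwards [Filter.eventually_le_atBot 0] with x hx
      simp [hfneg x hx]
    · have h1 := (isLittleO_exp_neg_mul_rpow_atTop (a := c * π) (by positivity) (-2 - a)).isBigO
      have h2 : (fun x : ℝ => π ^ a * x ^ a * Real.exp (-(c * π) * x)) =O[Filter.atTop]
          fun x : ℝ => π ^ a * x ^ a * x ^ (-2 - a) :=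
        (Asymptotics.isBigO_refl _ _).mul h1
      have h3 : (fun x : ℝ => π ^ a * x ^ a * x ^ (-2 - a)) =O[Filter.atTop]
          fun x : ℝ => |x| ^ (-(2:ℝ)) := by
        apply Asymptotics.IsBigO.of_bound (π ^ a)
        filter_upwards [Filter.eventually_gt_atTop 0] with x hx
        rw [mul_assoc, ← Real.rpow_add hx, abs_of_pos hx, norm_mul,
          Real.norm_of_nonneg (by positivity : 0 ≤ π ^ a)]
        apply le_of_eq; congr 3; ring
      refine Asymptotics.IsBigO.trans ?_ (h2.trans h3)
      apply Asymptotics.IsBigO.of_bound 1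
      filter_upwards [Filter.eventually_gt_atTop 0] with x hx
      rw [hfpos x hx, bz_norm a _ _ (by positivity), one_mul, Real.mul_rpow Real.pi_pos.le hx.le,
        Real.norm_of_nonneg (by positivity)]
      apply le_of_eq; congr 2; simp; ring
  have hsum : Summable fun k : ℤ => 𝓕 f (k : ℝ) := by
    simp_rw [hFT]
    exact (bz_sumk a ha c _).mul_left _
  have P := Real.tsum_eq_tsum_fourier_of_rpow_decay_of_summable hcont one_lt_two hdecay hsum 0
  simp only [zero_add, QuotientAddGroup.mk_zero, fourier_eval_zero, mul_one, hFT] at P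
  rw [tsum_mul_left] at P
  have hpi : (π : ℂ) ≠ 0 := by exact_mod_cast Real.pi_pos.ne'
  rw [inv_mul_eq_div, eq_div_iff hpi] at P
  rw [← P, mul_comm]
  congr 1
  have hinj : Function.Injective (fun n : ℕ => (n : ℤ) + 1) := fun x y h => by simpa using h
  rw [← hinj.tsum_eq]
  · refine tsum_congr fun n => ?_
    rw [hfpos _ (by push_cast; positivity)]
    have : cexp (-((c + I) * (π * (((n:ℤ) + 1 : ℤ) : ℝ) : ℝ)))
       = (-1) ^ (n+1) * cexp (-c * (π * (n + 1))) := by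
      have h5 : (-1 : ℂ) = cexp (-(π * I)) := by
        rw [Complex.exp_neg, Complex.exp_pi_mul_I]; norm_num
      rw [h5, ← Complex.exp_nat_mul, ← Complex.exp_add]
      congr 1; push_cast; ring
    rw [this]
    push_cast; ring
  · intro k hk
    by_contra h
    apply hk
    apply hfneg
    have : k ≤ 0 := by
      by_contra h'
      exact h ⟨(k - 1).toNat, by simp; omega⟩
    exact_mod_cast this

lemma bz_expand (x : ℝ) (hx : 0 < x) :
    HasSum (fun q : ℕ × ℕ => cexp (-((((q.1 : ℂ) + q.2 + 1) + I * (q.2 - q.1)) * x)))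
      (-(((1 / (Real.cos x - Real.cosh x) : ℝ) : ℂ) / 2)) := by
  set E : ℂ := cexp ((I - 1) * x / 2) with hE
  set F : ℂ := cexp ((-I - 1) * x / 2) with hF
  have hE0 : E ≠ 0 := Complex.exp_ne_zero _
  have hF0 : F ≠ 0 := Complex.exp_ne_zero _
  have hE1 : ‖E ^ 2‖ < 1 := by
    rw [hE, ← Complex.exp_nat_mul, Complex.norm_exp]
    simp; linarith
  have hF1 : ‖F ^ 2‖ < 1 := by
    rw [hF, ← Complex.exp_nat_mul, Complex.norm_exp]
    simp; linarith
  have hE2 : 1 - E ^ 2 ≠ 0 := by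
    intro h
    rw [← sub_eq_zero.1 h] at hE1; simp at hE1
  have hF2 : 1 - F ^ 2 ≠ 0 := by
    intro h
    rw [← sub_eq_zero.1 h] at hF1; simp at hF1
  have h1 := (hasSum_geometric_of_norm_lt_one hE1).mul (hasSum_geometric_of_norm_lt_one hF1)
    (summable_mul_of_summable_norm (by simpa using summable_geometric_of_lt_one (norm_nonneg _) hE1)
      (by simpa using summable_geometric_of_lt_one (norm_nonneg _) hF1))
  have h2 := h1.mul_left (E * F)
  have hcosh : Complex.cosh x = (E * F + 1 / (E * F)) / 2 := by
    rw [Complex.cosh, hE, hF, ← Complex.exp_add, one_div, ← Complex.exp_neg, add_comm]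
    congr 3 <;> ring
  have hcos : Complex.cos x = (E / F + F / E) / 2 := by
    rw [Complex.cos, hE, hF, ← Complex.exp_sub, ← Complex.exp_sub]
    congr 3 <;> ring
  convert! h2 using 1
  · ext q
    rw [← pow_mul, ← pow_mul, hE, hF, ← Complex.exp_nat_mul, ← Complex.exp_nat_mul,
      ← Complex.exp_add, ← Complex.exp_add, ← Complex.exp_add]
    congr 1; push_cast; ring
  · push_cast
    have : Complex.cos x - Complex.cosh x = -((1 - E ^ 2) * (1 - F ^ 2)) / (2 * E * F) := by
      rw [hcosh, hcos]; field_simp; ring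
    rw [this]
    field_simp

lemma bz_sumjk (s : ℝ) (hs : 3 ≤ s) :
    Summable (fun q : ℕ × ℕ => (1 / ((q.1 : ℝ) + q.2 + 1)) ^ s) := by
  have h0 : Summable (fun n : ℕ => (1 / ((n : ℝ) + 1)) ^ (3 / 2 : ℝ)) := by
    have := (Real.summable_one_div_nat_rpow (p := 3/2)).2 (by norm_num)
    have := (summable_nat_add_iff 1).2 this
    refine this.congr fun n => ?_
    rw [Real.div_rpow (by norm_num) (by positivity), Real.one_rpow]; push_cast; rfl
  refine Summable.of_nonneg_of_le (fun q => by positivity) (fun q => ?_)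
    (h0.mul_of_nonneg h0 (fun n => by positivity) (fun n => by positivity))
  have h1 : (1 / ((q.1 : ℝ) + q.2 + 1)) ≤ 1 := by
    rw [div_le_one (by positivity)]; linarith [(Nat.cast_nonneg q.1 : (0:ℝ) ≤ q.1), (Nat.cast_nonneg q.2 : (0:ℝ) ≤ q.2)]
  rw [← Real.mul_rpow (by positivity) (by positivity)]
  calc (1 / ((q.1 : ℝ) + q.2 + 1)) ^ s ≤ (1 / ((q.1 : ℝ) + q.2 + 1)) ^ (3:ℝ) :=
        Real.rpow_le_rpow_of_exponent_ge (by positivity) h1 hs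
    _ = ((1 / ((q.1 : ℝ) + q.2 + 1)) ^ 2) ^ (3 / 2 : ℝ) := by
        rw [← Real.rpow_natCast, ← Real.rpow_mul (by positivity)]; norm_num
    _ ≤ _ := by
        apply Real.rpow_le_rpow (by positivity) _ (by norm_num)
        rw [div_pow, one_pow, div_mul_div_comm, one_mul]
        apply one_div_le_one_div_of_le (by positivity)
        nlinarith [(Nat.cast_nonneg q.1 : (0:ℝ) ≤ q.1), (Nat.cast_nonneg q.2 : (0:ℝ) ≤ q.2),
          mul_nonneg (Nat.cast_nonneg q.1 : (0:ℝ) ≤ q.1) (Nat.cast_nonneg q.2 : (0:ℝ) ≤ q.2)]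

lemma bz_integral (a : ℝ) (ha : 2 ≤ a) :
    HasSum (fun q : ℕ × ℕ => (1 / (((q.1 : ℂ) + q.2 + 1) + I * (q.2 - q.1))) ^ ((a + 1 : ℝ) : ℂ)
        * Complex.Gamma ((a + 1 : ℝ) : ℂ))
      (-(((∫ x in Set.Ioi (0 : ℝ), x ^ a / (Real.cos x - Real.cosh x) : ℝ) : ℂ) / 2)) := by
  have hre : ∀ q : ℕ × ℕ, (((q.1 : ℂ) + q.2 + 1) + I * (q.2 - q.1)).re = (q.1 : ℝ) + q.2 + 1 := by
    intro q; simp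
  have hpos : ∀ q : ℕ × ℕ, 0 < (((q.1 : ℂ) + q.2 + 1) + I * (q.2 - q.1)).re := by
    intro q; rw [hre]; positivity
  have key := MeasureTheory.hasSum_integral_of_summable_integral_norm
    (μ := MeasureTheory.volume.restrict (Set.Ioi 0))
    (F := fun (q : ℕ × ℕ) (x : ℝ) => ((x ^ a : ℝ) : ℂ) *
      cexp (-((((q.1 : ℂ) + q.2 + 1) + I * (q.2 - q.1)) * x)))
    (fun q => bz_int a (by linarith) _ (hpos q)) ?_
  · convert! key using 1
    · ext q
      exact (bz_gamma a (by linarith) _ (hpos q)).symm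
    · rw [← integral_complex_ofReal, ← MeasureTheory.integral_div, ← MeasureTheory.integral_neg]
      refine MeasureTheory.setIntegral_congr_fun measurableSet_Ioi (fun x hx => ?_)
      have := ((bz_expand x hx).mul_left ((x ^ a : ℝ) : ℂ)).tsum_eq
      rw [this]
      push_cast; ring
  · have h := (bz_sumjk (a + 1) (by linarith)).mul_right (Real.Gamma (a + 1))
    refine h.congr fun q => ?_
    rw [← Real.integral_rpow_mul_exp_neg_mul_Ioi (by linarith) (by positivity)]
    refine MeasureTheory.setIntegral_congr_fun measurableSet_Ioi (fun x hx => ?_)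
    rw [bz_norm a _ x hx, hre]
    ring_nf

lemma bz_mul_cpow (x y s : ℂ) (hx : 0 < x.re) (hy : 0 < y.re) :
    (1 / (x * y)) ^ s = (1 / x) ^ s * (1 / y) ^ s := by
  have h : ∀ z : ℂ, 0 < z.re → 0 < (1 / z).re := by
    intro z hz
    rw [one_div, inv_re]
    exact div_pos hz (normSq_pos.2 (by rintro rfl; simp at hz))
  have hx1 := h x hx
  have hy1 := h y hy
  have hx0 : 1 / x ≠ 0 := by intro h; rw [h] at hx1; simp at hx1
  have hy0 : 1 / y ≠ 0 := by intro h; rw [h] at hy1; simp at hy1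
  rw [show 1 / (x * y) = (1 / x) * (1 / y) by rw [one_div_mul_one_div]]
  rw [cpow_def_of_ne_zero (mul_ne_zero hx0 hy0), cpow_def_of_ne_zero hx0, cpow_def_of_ne_zero hy0,
    Complex.log_mul hx0 hy0, add_mul, Complex.exp_add]
  have h1 := abs_lt.1 (abs_arg_lt_pi_div_two_iff.2 (Or.inl hx1))
  have h2 := abs_lt.1 (abs_arg_lt_pi_div_two_iff.2 (Or.inl hy1))
  constructor <;> linarith [h1.1, h1.2, h2.1, h2.2]

lemma bz_const (a : ℝ) :
    (1 + Complex.I ^ ((a : ℂ) + 1)) / (Complex.I * (1 + Complex.I) ^ ((a : ℂ) - 1))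
      = 2 * ((1 / (1 + I)) ^ ((a + 1 : ℝ) : ℂ) + (1 / (1 - I)) ^ ((a + 1 : ℝ) : ℂ)) := by
  have hI : (1 + I) ≠ 0 := by intro h; have := congrArg re h; simp at this
  have hI' : (1 - I) ≠ 0 := by intro h; have := congrArg re h; simp at this
  have h1 : (1 + I) ^ ((a : ℂ) - 1) = (1 + I) ^ ((a + 1 : ℝ) : ℂ) / (2 * I) := by
    rw [show ((a : ℂ) - 1) = ((a + 1 : ℝ) : ℂ) - 2 by push_cast; ring, cpow_sub _ _ hI]
    congr 1
    rw [Complex.cpow_ofNat]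
    linear_combination I_sq
  have hdiv : 1 / (1 / (1 + I)) = 1 + I := by field_simp
  have h2 : I ^ ((a + 1 : ℝ) : ℂ) = (1 + I) ^ ((a + 1 : ℝ) : ℂ) * (1 / (1 - I)) ^ ((a + 1 : ℝ) : ℂ) := by
    have := bz_mul_cpow (1 / (1 + I)) (1 - I) ((a + 1 : ℝ) : ℂ)
      (by rw [one_div, inv_re]; exact div_pos (by simp) (normSq_pos.2 hI)) (by simp)
    rw [hdiv] at this
    rw [← this]
    congr 1
    field_simp
    linear_combination -I_sq
  have h3 : (1 / (1 + I)) ^ ((a + 1 : ℝ) : ℂ) = ((1 + I) ^ ((a + 1 : ℝ) : ℂ))⁻¹ := by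
    rw [one_div, inv_cpow]
    intro h
    rw [arg_eq_pi_iff] at h
    simp at h
  have h4 : (1 + I) ^ ((a + 1 : ℝ) : ℂ) ≠ 0 := by simp [cpow_eq_zero_iff, hI]
  rw [h1, h3, show ((a : ℂ) + 1) = ((a + 1 : ℝ) : ℂ) by push_cast; rfl, h2]
  have := I_ne_zero
  field_simp

lemma bz_sinh (y : ℝ) (hy : 0 < y) :
    ∑' j : ℕ, Real.exp (-(2 * (j:ℝ) + 1) * y) = 1 / (2 * Real.sinh y) := by
  have h : ∀ j : ℕ, Real.exp (-(2 * (j:ℝ) + 1) * y) = Real.exp (-y) * (Real.exp (-(2 * y))) ^ j := by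
    intro j
    rw [← Real.exp_nat_mul, ← Real.exp_add]; congr 1; ring
  have hlt : Real.exp (-(2 * y)) < 1 := by rw [Real.exp_lt_one_iff]; linarith
  simp_rw [h]
  rw [tsum_mul_left, tsum_geometric_of_lt_one (Real.exp_pos _).le hlt, Real.sinh_eq]
  have h1 : Real.exp (-(2 * y)) = Real.exp (-y) ^ 2 := by
    rw [← Real.exp_nat_mul]; congr 1; push_cast; ring
  have h2 : Real.exp y = (Real.exp (-y))⁻¹ := by rw [Real.exp_neg, inv_inv]
  rw [h1] at hlt ⊢
  rw [h2]
  have h3 : 1 - Real.exp (-y) ^ 2 ≠ 0 := by linarith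
  have h4 := Real.exp_pos (-y)
  field_simp

lemma bz_swap (a : ℝ) :
    ∑' j : ℕ, ∑' n : ℕ, ((π * (n + 1)) ^ a * (-1) ^ (n + 1)
        * Real.exp (-(2 * (j:ℝ) + 1) * (π * (n + 1))) : ℝ)
      = - (π ^ a / 2) * ∑' n : ℕ, (-1 : ℝ) ^ n * ((n : ℝ) + 1) ^ a /
            Real.sinh (((n : ℝ) + 1) * Real.pi) := by
  have hs1 : Summable (fun n : ℕ => (π * ((n:ℝ) + 1)) ^ a * Real.exp (-(π * ((n:ℝ) + 1)))) := by
    have h1 := (isLittleO_exp_neg_mul_rpow_atTop (a := π) Real.pi_pos (-2 - a)).isBigO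
    have h2 : (fun x : ℝ => π ^ a * x ^ a * Real.exp (-π * x)) =O[Filter.atTop]
        fun x : ℝ => π ^ a * x ^ a * x ^ (-2 - a) :=
      (Asymptotics.isBigO_refl _ _).mul h1
    have h3 : (fun x : ℝ => π ^ a * x ^ a * x ^ (-2 - a)) =O[Filter.atTop]
        fun x : ℝ => x ^ (-(2:ℝ)) := by
      apply Asymptotics.IsBigO.of_bound (π ^ a)
      filter_upwards [Filter.eventually_gt_atTop 0] with x hx
      rw [mul_assoc, ← Real.rpow_add hx, norm_mul,
        Real.norm_of_nonneg (by positivity : 0 ≤ π ^ a)]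
      apply le_of_eq; congr 3; ring
    have h4 := (h2.trans h3).comp_tendsto tendsto_natCast_atTop_atTop
    have h5 := summable_of_isBigO_nat (Real.summable_nat_rpow.2 (by norm_num)) h4
    refine ((summable_nat_add_iff 1).2 h5).congr fun n => ?_
    simp only [Function.comp_apply]
    rw [← Real.mul_rpow (by positivity) (by positivity)]
    push_cast; ring_nf
  have hs2 : Summable (fun j : ℕ => Real.exp (-(2 * π)) ^ j) :=
    summable_geometric_of_lt_one (Real.exp_pos _).le
      (by rw [Real.exp_lt_one_iff]; linarith [Real.pi_pos])
  have hsum : Summable (Function.uncurry fun (j n : ℕ) => ((π * ((n:ℝ) + 1)) ^ a * (-1) ^ (n + 1)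
        * Real.exp (-(2 * (j:ℝ) + 1) * (π * (n + 1))) : ℝ)) := by
    refine Summable.of_norm_bounded
      (hs2.mul_of_nonneg hs1 (fun n => by positivity) (fun n => by positivity)) ?_
    rintro ⟨j, n⟩
    simp only [Function.uncurry_apply_pair]
    rw [norm_mul, norm_mul, norm_pow, norm_neg, norm_one, one_pow, mul_one,
      Real.norm_of_nonneg (by positivity), Real.norm_of_nonneg (by positivity), mul_comm (_ ^ j),
      ← Real.exp_nat_mul, mul_assoc (_ ^ a), ← Real.exp_add]
    gcongr
    have h1 : (0:ℝ) ≤ (j:ℝ) * π * n := by positivity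
    nlinarith
  rw [← hsum.tsum_comm, ← tsum_mul_left]
  refine tsum_congr fun n => ?_
  rw [tsum_mul_left, bz_sinh _ (by positivity), Real.mul_rpow (by positivity) (by positivity),
    mul_comm π]
  have : Real.sinh (((n:ℝ) + 1) * π) ≠ 0 := (Real.sinh_pos_iff.2 (by positivity)).ne'
  field_simp
  ring

theorem berndt_integral_order_one_minus (a : ℝ) (ha : 2 ≤ a) :
    (1 + Complex.I ^ ((a : ℂ) + 1)) / (Complex.I * (1 + Complex.I) ^ ((a : ℂ) - 1)) *
        ((∫ x in Set.Ioi (0 : ℝ), x ^ a / (Real.cos x - Real.cosh x) : ℝ) : ℂ)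
      = 2 * (Real.pi : ℂ) ^ ((a : ℂ) + 1) *
        ((∑' n : ℕ, (-1 : ℝ) ^ n * ((n : ℝ) + 1) ^ a /
            Real.sinh (((n : ℝ) + 1) * Real.pi) : ℝ) : ℂ) := by
  rw [bz_const]
  have H := bz_integral a ha
  set J : ℂ := ((∫ x in Set.Ioi (0 : ℝ), x ^ a / (Real.cos x - Real.cosh x) : ℝ) : ℂ) with hJ
  set T : ℂ → ℂ := fun z => (1 / z) ^ ((a + 1 : ℝ) : ℂ) * Complex.Gamma ((a + 1 : ℝ) : ℂ) with hT
  have hpos : ∀ q : ℕ × ℕ, 0 < (((q.1 : ℂ) + q.2 + 1) + I * (q.2 - q.1)).re := by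
    intro q
    have : (((q.1 : ℂ) + q.2 + 1) + I * (q.2 - q.1)).re = (q.1 : ℝ) + q.2 + 1 := by simp
    rw [this]; positivity
  have hA : HasSum (fun q : ℕ × ℕ => T (((2 * (q.1:ℝ) + 1 : ℝ) : ℂ) + I * (2 * ((q.2 : ℤ) : ℂ) + 1)))
      ((1 / (1 + I)) ^ ((a + 1 : ℝ) : ℂ) * (-(J / 2))) := by
    refine (H.mul_left ((1 / (1 + I)) ^ ((a + 1 : ℝ) : ℂ))).congr_fun ?_
    intro q
    simp only [hT]
    rw [← mul_assoc, ← bz_mul_cpow _ _ _ (by simp) (hpos q)]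
    congr 3
    push_cast
    linear_combination (-(q.2:ℂ) + q.1) * I_sq
  have hB0 : HasSum (fun q : ℕ × ℕ => T (((2 * (q.2:ℝ) + 1 : ℝ) : ℂ) + I * (2 * ((-((q.1 : ℤ) + 1) : ℤ) : ℂ) + 1)))
      ((1 / (1 - I)) ^ ((a + 1 : ℝ) : ℂ) * (-(J / 2))) := by
    refine (H.mul_left ((1 / (1 - I)) ^ ((a + 1 : ℝ) : ℂ))).congr_fun ?_
    intro q
    simp only [hT]
    rw [← mul_assoc, ← bz_mul_cpow _ _ _ (by simp) (hpos q)]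
    congr 3
    push_cast
    linear_combination (q.2 - q.1 : ℂ) * I_sq
  have hB := (Equiv.prodComm ℕ ℕ).hasSum_iff.2 hB0
  have hAB := hA.add hB
  have e1 := hAB.tsum_eq
  rw [hAB.summable.tsum_prod] at e1
  have e2 : ∀ j : ℕ, (∑' k : ℕ, (T (((2 * (j:ℝ) + 1 : ℝ) : ℂ) + I * (2 * ((k : ℤ) : ℂ) + 1)) +
      T (((2 * (j:ℝ) + 1 : ℝ) : ℂ) + I * (2 * ((-((k : ℤ) + 1) : ℤ) : ℂ) + 1)))) =
      π * ((∑' n : ℕ, ((π * (n + 1)) ^ a * (-1) ^ (n + 1)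
        * Real.exp (-(2 * (j:ℝ) + 1) * (π * (n + 1))) : ℝ) : ℝ) : ℂ) := by
    intro j
    have hS := bz_sumk a ha (2 * (j:ℝ) + 1) (Complex.Gamma ((a + 1 : ℝ) : ℂ))
    rw [Complex.ofReal_tsum, ← bz_poisson a ha (2 * (j:ℝ) + 1) (by positivity)]
    have s1 : Summable fun k : ℕ => T (((2 * (j:ℝ) + 1 : ℝ) : ℂ) + I * (2 * ((k : ℤ) : ℂ) + 1)) :=
      hS.comp_injective (i := fun k : ℕ => (k : ℤ)) (fun x y h => by simpa using h)
    have s2 : Summable fun k : ℕ =>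
        T (((2 * (j:ℝ) + 1 : ℝ) : ℂ) + I * (2 * ((-((k : ℤ) + 1) : ℤ) : ℂ) + 1)) :=
      hS.comp_injective (i := fun k : ℕ => -((k : ℤ) + 1)) (fun x y h => by simpa using h)
    rw [s1.tsum_add s2]
    exact (tsum_of_nat_of_neg_add_one
      (f := fun k : ℤ => T (((2 * (j:ℝ) + 1 : ℝ) : ℂ) + I * (2 * (k : ℂ) + 1))) s1 s2).symm
  have e3 := (tsum_congr e2).symm.trans e1
  rw [tsum_mul_left, ← Complex.ofReal_tsum, bz_swap] at e3
  have hpi : (π : ℂ) ≠ 0 := by exact_mod_cast Real.pi_pos.ne'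
  rw [cpow_add _ _ hpi, cpow_one, ← Complex.ofReal_cpow Real.pi_pos.le]
  rw [Complex.ofReal_mul, Complex.ofReal_neg, Complex.ofReal_div] at e3
  simp only [Complex.ofReal_ofNat] at e3
  linear_combination 4 * e3
end
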